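/- arXiv:1301.3552 — 2 statements merged into one kernel-verified Lean document; each statement's English description precedes it below -/
import Mathlib

section
/- Let (A,B,C,D) be a minimal realization of an m×m transfer function R that is negative imaginary, and let (A_s,B_s,C_s,D_s) be a minimal realization of an m×m transfer function R_s that is strictly negative imaginary. Assume D·D_s = 0 and D_s ⪰ 0. Then I − D_sD and I − DD_s are invertible, all eigenvalues of the m×m real matrix R(0)·R_s(0) = (D − CA⁻¹B)(D_s − C_sA_s⁻¹B_s) are real, and the closed-loop state matrix of the positive feedback interconnection, Ā = [[A + B(I−D_sD)⁻¹D_sC, B(I−D_sD)⁻¹C_s], [B_s(I−DD_s)⁻¹C, A_s + B_s(I−DD_s)⁻¹DC_s]], is Hurwitz if and only if every eigenvalue of R(0)·R_s(0) is strictly less than 1. -/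
open Matrix Filter Topology ComplexOrder

/-- The (complex) eigenvalues of a real square matrix. -/
noncomputable def eigs {k : Type*} [Fintype k] [DecidableEq k] (A : Matrix k k ℝ) : Set ℂ :=
  spectrum ℂ (A.map Complex.ofReal)

/-- A real square matrix is Hurwitz if all of its (complex) eigenvalues have negative real
part. -/
noncomputable def IsHurwitz {k : Type*} [Fintype k] [DecidableEq k] (A : Matrix k k ℝ) : Prop :=
  ∀ μ ∈ eigs A, μ.re < 0

/-- Transfer function `R(s) = C (sI - A)⁻¹ B + D` of a real state-space system, as a
complex matrix. -/
noncomputable def tf {n m : ℕ} (A : Matrix (Fin n) (Fin n) ℝ) (B : Matrix (Fin n) (Fin m) ℝ)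
    (C : Matrix (Fin m) (Fin n) ℝ) (D : Matrix (Fin m) (Fin m) ℝ) (s : ℂ) :
    Matrix (Fin m) (Fin m) ℂ :=
  C.map (Complex.ofReal) * (s • (1 : Matrix (Fin n) (Fin n) ℂ) - A.map Complex.ofReal)⁻¹ *
      B.map Complex.ofReal + D.map Complex.ofReal

/-- A state-space realization `(A,B,C,D)` is minimal if the controllability matrix and the
observability matrix both have rank `n`. -/
def IsMinimal {n m : ℕ} (A : Matrix (Fin n) (Fin n) ℝ) (B : Matrix (Fin n) (Fin m) ℝ)
    (C : Matrix (Fin m) (Fin n) ℝ) : Prop :=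
  (Matrix.of fun (i : Fin n) (p : Fin n × Fin m) => (A ^ (p.1 : ℕ) * B) i p.2).rank = n ∧
  (Matrix.of fun (p : Fin n × Fin m) (i : Fin n) => (C * A ^ (p.1 : ℕ)) p.2 i).rank = n

/-- The system `(A,B,C,D)` is negative imaginary (NI). -/
noncomputable def IsNI {n m : ℕ} (A : Matrix (Fin n) (Fin n) ℝ) (B : Matrix (Fin n) (Fin m) ℝ)
    (C : Matrix (Fin m) (Fin n) ℝ) (D : Matrix (Fin m) (Fin m) ℝ) : Prop :=
  (∀ μ ∈ eigs A, μ ≠ 0 ∧ μ.re ≤ 0) ∧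
  (∀ ω : ℝ, 0 < ω → (Complex.I * ω) ∉ eigs A →
    (Complex.I • (tf A B C D (Complex.I * ω) - (tf A B C D (Complex.I * ω))ᴴ)).PosSemidef) ∧
  (∀ ω : ℝ, 0 < ω → (Complex.I * ω) ∈ eigs A →
    ∃ K : Matrix (Fin m) (Fin m) ℂ,
      Tendsto (fun s : ℂ => (s - Complex.I * ω) • Complex.I • tf A B C D s)
        (𝓝[≠] (Complex.I * ω)) (𝓝 K) ∧ K.PosSemidef)

/-- The system `(A,B,C,D)` is strictly negative imaginary (SNI). -/
noncomputable def IsSNI {n m : ℕ} (A : Matrix (Fin n) (Fin n) ℝ) (B : Matrix (Fin n) (Fin m) ℝ)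
    (C : Matrix (Fin m) (Fin n) ℝ) (D : Matrix (Fin m) (Fin m) ℝ) : Prop :=
  IsHurwitz A ∧
  (∀ ω : ℝ, 0 < ω →
    (Complex.I • (tf A B C D (Complex.I * ω) - (tf A B C D (Complex.I * ω))ᴴ)).PosDef)


section Spectral
variable {κ : Type*} [Fintype κ] [DecidableEq κ]

lemma mem_spec_iff (M : Matrix κ κ ℂ) (μ : ℂ) :
    μ ∈ spectrum ℂ M ↔ ∃ v : κ → ℂ, v ≠ 0 ∧ M *ᵥ v = μ • v := by
  rw [spectrum.mem_iff, Matrix.isUnit_iff_isUnit_det, isUnit_iff_ne_zero, not_not,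
    ← Matrix.exists_mulVec_eq_zero_iff]
  refine exists_congr fun v => and_congr_right fun _ => ?_
  rw [Algebra.algebraMap_eq_smul_one, Matrix.sub_mulVec, Matrix.smul_mulVec, Matrix.one_mulVec,
    sub_eq_zero, eq_comm]

lemma not_mem_spec_zero {M : Matrix κ κ ℂ} {μ : ℂ} (h : μ ∉ spectrum ℂ M) {v : κ → ℂ}
    (hv : μ • v = M *ᵥ v) : v = 0 := by
  by_contra h0
  exact h ((mem_spec_iff M μ).2 ⟨v, h0, hv.symm⟩)

lemma mem_spec_iff_root (M : Matrix κ κ ℂ) (μ : ℂ) :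
    μ ∈ spectrum ℂ M ↔ M.charpoly.eval μ = 0 := by
  rw [spectrum.mem_iff, Matrix.isUnit_iff_isUnit_det, isUnit_iff_ne_zero, not_not,
    Matrix.eval_charpoly]
  rfl

lemma charpoly_lower (M : Matrix κ κ ℂ) (h : ∀ μ ∈ spectrum ℂ M, μ.re < 0) (z : ℂ)
    (hz : 0 < z.re) : z.re ^ Fintype.card κ ≤ ‖M.charpoly.eval z‖ := by
  have hs : M.charpoly.Splits := IsAlgClosed.splits _
  rw [hs.eval_eq_prod_roots_of_monic (Matrix.charpoly_monic M), ← Matrix.charpoly_natDegree_eq_dim M,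
    hs.natDegree_eq_card_roots]
  have : ∀ s : Multiset ℂ, (∀ μ ∈ s, μ.re < 0) →
      z.re ^ s.card ≤ ‖(s.map (fun a => z - a)).prod‖ := by
    intro s
    induction s using Multiset.induction with
    | empty => simp
    | cons a s ih =>
      intro hs
      rw [Multiset.card_cons, Multiset.map_cons, Multiset.prod_cons, norm_mul, pow_succ, mul_comm]
      have h1 : z.re ≤ ‖z - a‖ := by
        refine le_trans ?_ (Complex.re_le_norm _)
        have := hs a (Multiset.mem_cons_self a s)
        simp; linarith
      exact mul_le_mul h1 (ih fun μ hμ => hs μ (Multiset.mem_cons_of_mem hμ)) (by positivity)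
        (by positivity)
  apply this
  intro μ hμ
  apply h
  rw [mem_spec_iff_root]
  exact (Polynomial.mem_roots'.1 hμ).2

open scoped Matrix.Norms.Operator in
lemma spec_bound (M : ℝ → Matrix κ κ ℂ) (hM : Continuous M) :
    ∃ ρ : ℝ, ∀ t ∈ Set.Icc (0:ℝ) 1, ∀ μ ∈ spectrum ℂ (M t), ‖μ‖ ≤ ρ := by
  obtain ⟨ρ, hρ⟩ := (isCompact_Icc (a := (0:ℝ)) (b := 1)).exists_bound_of_continuousOn
    (f := M) hM.continuousOn
  refine ⟨ρ * ‖(1 : Matrix κ κ ℂ)‖, fun t ht μ hμ => ?_⟩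
  refine (spectrum.norm_le_norm_mul_of_mem hμ).trans ?_
  exact mul_le_mul_of_nonneg_right (hρ t ht) (norm_nonneg _)

lemma path_hurwitz (M : ℝ → Matrix κ κ ℂ) (hM : Continuous M)
    (h : ∀ t ∈ Set.Icc (0:ℝ) 1, ∀ μ ∈ spectrum ℂ (M t), μ.re ≠ 0)
    (h0 : ∀ μ ∈ spectrum ℂ (M 0), μ.re < 0) : ∀ μ ∈ spectrum ℂ (M 1), μ.re < 0 := by
  have hcont : Continuous fun p : ℝ × ℂ => (M p.1).charpoly.eval p.2 := by
    simp_rw [Matrix.eval_charpoly]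
    apply Continuous.matrix_det
    refine Continuous.sub ?_ (hM.comp continuous_fst)
    simp_rw [Matrix.scalar_apply]
    exact Continuous.matrix_diagonal (continuous_pi fun _ => continuous_snd)
  obtain ⟨ρ, hρ⟩ := spec_bound M hM
  let T : Set ℝ := {t | ∀ z : ℂ, 0 < z.re → z.re ^ Fintype.card κ ≤ ‖(M t).charpoly.eval z‖}
  let W : Set (ℝ × ℂ) := (Set.Icc (0:ℝ) 1 ×ˢ Metric.closedBall (0:ℂ) ρ) ∩
    ({p | 0 ≤ p.2.re} ∩ {p | (M p.1).charpoly.eval p.2 = 0})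
  have hW : IsCompact W := by
    apply (isCompact_Icc.prod (isCompact_closedBall _ _)).inter_right
    exact (isClosed_le continuous_const (Complex.continuous_re.comp continuous_snd)).inter
      (isClosed_eq hcont continuous_const)
  have hU : IsClosed (Set.image Prod.fst W) := (hW.image continuous_fst).isClosed
  have hT : IsClosed T := by
    simp only [T, Set.ofPred_forall]
    refine isClosed_iInter fun z => isClosed_iInter fun _ => ?_
    exact isClosed_le continuous_const
      ((hcont.comp (continuous_id.prodMk continuous_const)).norm)
  have hcover : Set.Icc (0:ℝ) 1 ⊆ T ∪ Set.image Prod.fst W := by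
    intro t ht
    by_cases hh : ∀ μ ∈ spectrum ℂ (M t), μ.re < 0
    · left
      exact fun z hz => charpoly_lower _ hh z hz
    · right
      push Not at hh
      obtain ⟨μ, hμ, hre⟩ := hh
      exact ⟨(t, μ), ⟨⟨ht, by simpa using hρ t ht μ hμ⟩, hre, (mem_spec_iff_root _ _).1 hμ⟩, rfl⟩
  intro μ hμ
  by_contra hre
  push Not at hre
  have hc := isPreconnected_closed_iff.1 (isPreconnected_Icc (a := (0:ℝ)) (b := 1)) T _ hT hU hcover
    ⟨0, by simp, fun z hz => charpoly_lower _ h0 z hz⟩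
    ⟨1, by simp, (1, μ), ⟨⟨by simp, by simpa using hρ 1 (by simp) μ hμ⟩, hre,
      (mem_spec_iff_root _ _).1 hμ⟩, rfl⟩
  obtain ⟨t, ht, hT', ⟨⟨t', z⟩, ⟨-, hz, hz0⟩, rfl⟩⟩ := hc
  have h1 := h t' ht z ((mem_spec_iff_root _ _).2 hz0)
  have h2 : 0 < z.re := lt_of_le_of_ne hz (Ne.symm h1)
  have h3 := hT' z h2
  simp only [Set.mem_ofPred_eq] at hz0
  rw [hz0, norm_zero] at h3
  exact absurd h3 (not_le.2 (pow_pos h2 _))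

end Spectral

section PL
open Complex Bornology

lemma local_nonneg (h : ℂ → ℂ) (Sp : Set ℂ) (hfin : Sp.Finite)
    (hd : ∀ s, s ∉ Sp → DifferentiableAt ℂ h s)
    (haxis : ∀ ω : ℝ, I * ω ∉ Sp → 0 ≤ (h (I * ω)).re)
    (hpole : ∀ ω : ℝ, I * ω ∈ Sp → ∃ k : ℝ, 0 ≤ k ∧
      Tendsto (fun s => (s - I * ω) * h s) (𝓝[≠] (I * ω)) (𝓝 (k : ℂ)))
    (ω : ℝ) (η : ℝ) (hη : 0 < η) :
    ∀ᶠ s in 𝓝[{s | 0 < s.re}] (I * ω), -η < (h s).re := by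
  by_cases hω : I * ω ∈ Sp
  · obtain ⟨k, hk, hlim⟩ := hpole ω hω
    set c : ℂ := I * ω with hc
    have hSpo : ∀ᶠ s in 𝓝 c, s ∉ Sp \ {c} := by
      have : IsClosed (Sp \ {c}) := (hfin.subset Set.sdiff_subset).isClosed
      exact this.isOpen_compl.mem_nhds (by simp)
    have hdp : ∀ᶠ s in 𝓝[≠] c, DifferentiableAt ℂ h s := by
      filter_upwards [nhdsWithin_le_nhds hSpo, self_mem_nhdsWithin] with s h1 h2
      exact hd s fun h3 => h1 ⟨h3, h2⟩
    let g : ℂ → ℂ := Function.update (fun s => (s - c) * h s) c k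
    have hgc : ContinuousAt g c := by
      rw [continuousAt_update_same]
      exact hlim
    have hga : AnalyticAt ℂ g c := by
      apply Complex.analyticAt_of_differentiable_on_punctured_nhds_of_continuousAt _ hgc
      filter_upwards [hdp, self_mem_nhdsWithin] with s h1 h2
      have : g =ᶠ[𝓝 s] fun s => (s - c) * h s := by
        filter_upwards [isOpen_compl_singleton.mem_nhds h2] with z hz
        simp only [g]
        rw [Function.update_of_ne hz]
      refine DifferentiableAt.congr_of_eventuallyEq ?_ this
      exact (differentiableAt_id.sub_const c).mul h1
    have hsl : ContinuousAt (dslope g c) c := continuousAt_dslope_same.2 hga.differentiableAt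
    have hg : ∀ s, s ≠ c → h s = k / (s - c) + dslope g c s := by
      intro s hs
      have hne : s - c ≠ 0 := sub_ne_zero.2 hs
      rw [dslope_of_ne _ hs, slope_def_field]
      simp only [g, Function.update_self, Function.update_of_ne hs]
      field_simp
      ring
    -- real part of the regular part at the pole is nonnegative
    have hre : 0 ≤ (dslope g c c).re := by
      have hpath : Tendsto (fun x : ℝ => I * (x : ℂ)) (𝓝[≠] ω) (𝓝[≠] c) := by
        apply tendsto_nhdsWithin_of_tendsto_nhds_of_eventually_within
        · have : Continuous fun x : ℝ => I * (x : ℂ) := by fun_prop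
          exact (this.tendsto ω).mono_left nhdsWithin_le_nhds
        · filter_upwards [self_mem_nhdsWithin] with x hx
          intro h1
          apply hx
          simpa [hc] using h1
      have h1 : Tendsto (fun x : ℝ => (dslope g c (I * x)).re) (𝓝[≠] ω) (𝓝 (dslope g c c).re) :=
        (Complex.continuous_re.tendsto _).comp
          ((hsl.tendsto.mono_left nhdsWithin_le_nhds).comp hpath)
      refine ge_of_tendsto h1 ?_
      filter_upwards [hpath (nhdsWithin_le_nhds hSpo), hpath self_mem_nhdsWithin] with x hx1 hx2
      have h2 : I * (x:ℂ) ∉ Sp := fun h3 => hx1 ⟨h3, hx2⟩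
      have h3 := haxis x h2
      rw [hg _ hx2] at h3
      have h4 : ((k : ℂ) / (I * x - c)).re = 0 := by
        have : I * (x:ℂ) - c = I * ((x - ω : ℝ) : ℂ) := by rw [hc]; push_cast; ring
        rw [this, div_mul_eq_div_div, Complex.div_ofReal_re]
        simp
      rw [Complex.add_re, h4, zero_add] at h3
      exact h3
    have h1 : ∀ᶠ s in 𝓝 c, -η < (dslope g c s).re := by
      have : ContinuousAt (fun s => (dslope g c s).re) c :=
        Complex.continuous_re.continuousAt.comp hsl
      exact this.eventually (lt_mem_nhds (by linarith))
    filter_upwards [nhdsWithin_le_nhds h1, self_mem_nhdsWithin] with s hs1 hs2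
    have hcre : c.re = 0 := by simp [hc]
    have hne : s ≠ c := by
      intro hsc
      replace hs2 : 0 < s.re := hs2
      rw [hsc] at hs2
      linarith
    rw [hg s hne, Complex.add_re]
    have : 0 ≤ ((k : ℂ) / (s - c)).re := by
      rw [Complex.div_re]
      replace hs2 : 0 < s.re := hs2
      simp only [Complex.ofReal_re, Complex.sub_re, hcre, sub_zero, Complex.ofReal_im, zero_mul,
        zero_div, add_zero]
      have := Complex.normSq_nonneg (s - c)
      positivity
    linarith
  · have h1 : ContinuousAt (fun s => (h s).re) (I * ω) :=
      Complex.continuous_re.continuousAt.comp (hd _ hω).continuousAt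
    have := haxis ω hω
    exact nhdsWithin_le_nhds (h1.eventually (lt_mem_nhds (by linarith)))

lemma strip_nonneg (h : ℂ → ℂ) (hinf : Tendsto h (cobounded ℂ) (𝓝 0))
    (hloc : ∀ ω η : ℝ, 0 < η → ∀ᶠ s in 𝓝[{s | 0 < s.re}] (I * ω), -η < (h s).re)
    (η : ℝ) (hη : 0 < η) :
    ∃ δ > 0, ∀ s : ℂ, 0 < s.re → s.re < δ → -η < (h s).re := by
  by_contra hcon
  push Not at hcon
  have hx : ∀ k : ℕ, ∃ s : ℂ, 0 < s.re ∧ s.re < 1 / ((k:ℝ) + 1) ∧ (h s).re ≤ -η := fun k =>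
    hcon _ (by positivity)
  choose s hs1 hs2 hs3 using hx
  have hfar : ∀ᶠ z in cobounded ℂ, -η < (h z).re := by
    have : Tendsto (fun z => (h z).re) (cobounded ℂ) (𝓝 0) := by
      simpa [Function.comp_def] using (Complex.continuous_re.tendsto _).comp hinf
    exact this.eventually (lt_mem_nhds (by linarith))
  have hb : IsBounded (Set.range s) := by
    have h1 : IsBounded {z | -η < (h z).re}ᶜ := by
      rw [isBounded_compl_iff]
      exact hfar
    refine h1.subset ?_
    rintro _ ⟨k, rfl⟩
    simpa using hs3 k
  obtain ⟨a, -, φ, hφ, hlim⟩ := tendsto_subseq_of_bounded hb (fun k => Set.mem_range_self k)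
  have hre0 : Tendsto (fun k => (s (φ k)).re) atTop (𝓝 0) := by
    have h1 : Tendsto (fun k : ℕ => 1 / ((φ k : ℝ) + 1)) atTop (𝓝 0) :=
      tendsto_one_div_add_atTop_nhds_zero_nat.comp hφ.tendsto_atTop
    exact squeeze_zero (fun k => (hs1 _).le) (fun k => (hs2 _).le) h1
  have hare : a.re = 0 :=
    tendsto_nhds_unique ((Complex.continuous_re.tendsto a).comp hlim) hre0
  have ha : a = I * (a.im : ℂ) := by
    apply Complex.ext <;> simp [hare]
  have hev := hloc a.im η hη
  rw [← ha] at hev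
  have hlim' : Tendsto (s ∘ φ) atTop (𝓝[{s | 0 < s.re}] a) :=
    tendsto_nhdsWithin_of_tendsto_nhds_of_eventually_within _ hlim
      (Eventually.of_forall fun k => hs1 _)
  obtain ⟨k, hk⟩ := (hlim'.eventually hev).exists
  have := hs3 (φ k)
  simp only [Function.comp] at hk
  linarith

lemma halfplane_nonneg (h : ℂ → ℂ) (hinf : Tendsto h (cobounded ℂ) (𝓝 0))
    (hd : ∀ s : ℂ, 0 < s.re → DifferentiableAt ℂ h s)
    (hloc : ∀ ω η : ℝ, 0 < η → ∀ᶠ s in 𝓝[{s | 0 < s.re}] (I * ω), -η < (h s).re)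
    (s : ℂ) (hs : 0 < s.re) : 0 ≤ (h s).re := by
  by_contra hneg
  push Not at hneg
  obtain ⟨δ, hδ, hstrip⟩ := strip_nonneg h hinf hloc (-(h s).re / 2) (by linarith)
  let d : ℝ := min (δ / 2) (s.re / 2)
  have hd0 : 0 < d := by simp only [d]; positivity
  have hdδ : d < δ := lt_of_le_of_lt (min_le_left _ _) (by linarith)
  have hds : d ≤ s.re / 2 := min_le_right _ _
  let f : ℂ → ℂ := fun z => Complex.exp (-(h (z + d)))
  have hfd : ∀ z : ℂ, 0 ≤ z.re → DifferentiableAt ℂ f z := by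
    intro z hz
    have h1 : DifferentiableAt ℂ (fun z : ℂ => h (z + d)) z := by
      have : DifferentiableAt ℂ h (z + d) := hd _ (by simp; linarith)
      exact this.comp z (differentiableAt_id.add_const _)
    exact h1.neg.cexp
  have hflim : Tendsto f (cobounded ℂ) (𝓝 1) := by
    have h1 : Tendsto (fun z : ℂ => z + d) (cobounded ℂ) (cobounded ℂ) :=
      tendsto_add_const_cobounded _
    have h2 := (hinf.comp h1).neg.cexp
    simpa using h2
  have key : ‖f (s - d)‖ ≤ Real.exp (-(h s).re / 2) := by
    apply PhragmenLindelof.right_half_plane_of_bounded_on_real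
    · constructor
      · intro z hz
        exact (hfd z (le_of_lt hz)).differentiableWithinAt
      · rw [Complex.closure_setOfPred_lt_re]
        intro z hz
        exact (hfd z hz).continuousAt.continuousWithinAt
    · refine ⟨1, by norm_num, 0, ?_⟩
      have h1 : f =O[cobounded ℂ] (fun _ => (1:ℝ)) := hflim.isBigO_one ℝ
      simpa using h1.mono inf_le_left
    · have h1 : Tendsto (fun x : ℝ => (x : ℂ)) atTop (cobounded ℂ) :=
        (RCLike.tendsto_ofReal_atTop_cobounded ℂ)
      exact (hflim.comp h1).norm.isBoundedUnder_le
    · intro x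
      simp only [f, Complex.norm_exp]
      apply Real.exp_le_exp.2
      have := hstrip (x * I + d) (by simpa using hd0) (by simpa using hdδ)
      simp only [Complex.neg_re]
      linarith
    · simp; linarith
  simp only [f, Complex.norm_exp, sub_add_cancel, Complex.neg_re] at key
  have := Real.exp_le_exp.1 key
  linarith

end PL

section Basics
open Complex Bornology

/-- complexification of a real matrix -/
noncomputable abbrev cm {a b : Type*} (M : Matrix a b ℝ) : Matrix a b ℂ := M.map Complex.ofReal

lemma cm_mul {a b c : Type*} [Fintype b] (M : Matrix a b ℝ) (N : Matrix b c ℝ) :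
    cm (M * N) = cm M * cm N := Matrix.map_mul (f := Complex.ofRealHom)

lemma cm_add {a b : Type*} (M N : Matrix a b ℝ) : cm (M + N) = cm M + cm N := by
  ext; simp [cm]

lemma cm_sub {a b : Type*} (M N : Matrix a b ℝ) : cm (M - N) = cm M - cm N := by
  ext; simp [cm]

lemma cm_neg {a b : Type*} (M : Matrix a b ℝ) : cm (-M) = -cm M := by
  ext; simp [cm]

lemma cm_one {a : Type*} [DecidableEq a] : cm (1 : Matrix a a ℝ) = 1 := by
  simp [cm]

lemma cm_zero {a b : Type*} : cm (0 : Matrix a b ℝ) = 0 := by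
  ext; simp [cm]

lemma cm_pow {a : Type*} [Fintype a] [DecidableEq a] (M : Matrix a a ℝ) (k : ℕ) :
    cm (M ^ k) = cm M ^ k := by
  induction k with
  | zero => simp
  | succ k ih => rw [pow_succ, pow_succ, cm_mul, ih]

lemma cm_conjTranspose {a b : Type*} (M : Matrix a b ℝ) : (cm M)ᴴ = cm Mᵀ := by
  ext; simp [cm]

lemma cm_star {a b : Type*} (M : Matrix a b ℝ) : (cm M).map star = cm M := by
  ext; simp [cm]

lemma unit_of_zero_notMem {a : Type*} [Fintype a] [DecidableEq a] {M : Matrix a a ℂ}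
    (h : (0:ℂ) ∉ spectrum ℂ M) : IsUnit M := by
  simpa using (spectrum.zero_notMem_iff ℂ).1 h

lemma cm_inv {a : Type*} [Fintype a] [DecidableEq a] {M : Matrix a a ℝ}
    (h : (0:ℂ) ∉ spectrum ℂ (cm M)) : cm (M⁻¹) = (cm M)⁻¹ := by
  have h1 : IsUnit (cm M).det := (Matrix.isUnit_iff_isUnit_det _).1 (unit_of_zero_notMem h)
  have h2 : (cm M).det = (M.det : ℂ) := ((Complex.ofRealHom).map_det M).symm
  have h3 : IsUnit M.det := by
    rw [h2] at h1
    rw [isUnit_iff_ne_zero] at h1 ⊢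
    exact_mod_cast h1
  symm
  apply Matrix.inv_eq_left_inv
  rw [← cm_mul, Matrix.nonsing_inv_mul _ h3, cm_one]

/-- the form `u* N v` -/
noncomputable def quad {a : Type*} [Fintype a] (N : Matrix a a ℂ) (u : a → ℂ) : ℂ :=
  star u ⬝ᵥ (N *ᵥ u)

lemma quad_star {a : Type*} [Fintype a] (N : Matrix a a ℂ) (u : a → ℂ) :
    quad (N.map star) u = star (quad N (star u)) := by
  simp [quad, dotProduct, mulVec, Finset.mul_sum]

lemma quad_add {a : Type*} [Fintype a] (M N : Matrix a a ℂ) (u : a → ℂ) :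
    quad (M + N) u = quad M u + quad N u := by
  simp [quad, Matrix.add_mulVec, dotProduct_add]

lemma quad_sub {a : Type*} [Fintype a] (M N : Matrix a a ℂ) (u : a → ℂ) :
    quad (M - N) u = quad M u - quad N u := by
  simp [quad, Matrix.sub_mulVec, dotProduct_sub]

lemma quad_smul {a : Type*} [Fintype a] (c : ℂ) (N : Matrix a a ℂ) (u : a → ℂ) :
    quad (c • N) u = c * quad N u := by
  simp [quad, Matrix.smul_mulVec]

lemma quad_conjTranspose {a : Type*} [Fintype a] (N : Matrix a a ℂ) (u : a → ℂ) :
    quad Nᴴ u = star (quad N u) := by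
  simp only [quad]
  rw [Matrix.star_dotProduct, Matrix.star_mulVec, Matrix.conjTranspose_conjTranspose,
    ← dotProduct_mulVec]

lemma quad_im_of_herm {a : Type*} [Fintype a] {N : Matrix a a ℂ} (h : N.IsHermitian)
    (u : a → ℂ) : (quad N u).im = 0 := by
  have h1 := quad_conjTranspose N u
  rw [h.eq] at h1
  exact Complex.conj_eq_iff_im.1 h1.symm

lemma quad_I {a : Type*} [Fintype a] (N : Matrix a a ℂ) (u : a → ℂ) :
    quad (I • (N - Nᴴ)) u = ((-2 * (quad N u).im : ℝ) : ℂ) := by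
  rw [quad_smul, quad_sub, quad_conjTranspose]
  apply Complex.ext
  · simp; ring
  · simp

lemma continuous_quad {a : Type*} [Fintype a] (u : a → ℂ) :
    Continuous fun N : Matrix a a ℂ => quad N u := by
  unfold quad
  exact continuous_const.dotProduct (continuous_id.matrix_mulVec continuous_const)

lemma real_symm {m : ℕ} (N : Matrix (Fin m) (Fin m) ℝ)
    (h : ∀ u, (quad (cm N) u).im ≤ 0) : N.IsSymm := by
  have h0 : ∀ u, (quad (cm N) u).im = 0 := by
    intro u
    have h1 := h u
    have h2 := h (star u)
    have h3 := quad_star (cm N) u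
    rw [cm_star] at h3
    rw [h3] at h1
    simp at h1
    have := congrArg Complex.im h3
    simp at this
    linarith
  have key : ∀ i k, N i k ≤ N k i := by
    intro i k
    have h1 := h0 (Pi.single i 1 + Pi.single k I)
    simp only [quad, Matrix.mulVec_add, dotProduct_add, star_add, add_dotProduct,
      ← Pi.single_star, Matrix.mulVec_single, single_dotProduct] at h1
    simp [cm] at h1
    linarith
  ext i k
  exact le_antisymm (key k i) (key i k)

open scoped Matrix.Norms.Operator in
lemma tendsto_inv_cobounded {a : Type*} [Fintype a] [DecidableEq a] (M : Matrix a a ℂ) :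
    Tendsto (fun s : ℂ => (s • (1 : Matrix a a ℂ) - M)⁻¹) (cobounded ℂ) (𝓝 0) := by
  have := spectrum.resolvent_tendsto_cobounded (𝕜 := ℂ) M
  refine this.congr fun s => ?_
  rw [resolvent, Matrix.nonsing_inv_eq_ringInverse, Algebra.algebraMap_eq_smul_one]

open scoped Matrix.Norms.Operator in
lemma differentiableAt_quad_inv {a b : Type*} [Fintype a] [DecidableEq a] [Fintype b]
    [DecidableEq b]
    (M : Matrix a a ℂ) (F : Matrix b a ℂ) (G : Matrix a b ℂ) (u : b → ℂ) (s : ℂ)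
    (hs : s ∉ spectrum ℂ M) :
    DifferentiableAt ℂ (fun s : ℂ => quad (F * (s • (1 : Matrix a a ℂ) - M)⁻¹ * G) u) s := by
  have h1 : DifferentiableAt ℂ (fun s : ℂ => (s • (1 : Matrix a a ℂ) - M)⁻¹) s := by
    have := (spectrum.hasDerivAt_resolvent_const_left (𝕜 := ℂ) (a := M) (k := s)
      (by simpa [spectrum] using hs)).differentiableAt
    have e : (fun s : ℂ => (s • (1 : Matrix a a ℂ) - M)⁻¹) = resolvent M := by
      funext s
      rw [resolvent, Matrix.nonsing_inv_eq_ringInverse, Algebra.algebraMap_eq_smul_one]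
    rw [e]
    exact this
  let L : Matrix a a ℂ →ₗ[ℂ] ℂ :=
    { toFun := fun X => quad (F * X * G) u
      map_add' := fun X Y => by rw [Matrix.mul_add, Matrix.add_mul, quad_add]
      map_smul' := fun c X => by simp [quad_smul] }
  exact (LinearMap.toContinuousLinearMap L).differentiableAt.comp s h1

lemma tendsto_quad_inv {a b : Type*} [Fintype a] [DecidableEq a] [Fintype b]
    (M : Matrix a a ℂ) (F : Matrix b a ℂ) (G : Matrix a b ℂ) (u : b → ℂ) :
    Tendsto (fun s : ℂ => quad (F * (s • (1 : Matrix a a ℂ) - M)⁻¹ * G) u) (cobounded ℂ)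
      (𝓝 0) := by
  have h1 := tendsto_inv_cobounded M
  have h2 : Continuous fun X : Matrix a a ℂ => quad (F * X * G) u :=
    (continuous_quad u).comp ((continuous_const.matrix_mul continuous_id).matrix_mul
      continuous_const)
  have h3 := (h2.tendsto 0).comp h1
  simpa [Function.comp_def, quad] using h3

lemma map_star_inv {a : Type*} [Fintype a] [DecidableEq a] (M : Matrix a a ℂ) :
    (M⁻¹).map star = (M.map star)⁻¹ := by
  have h : ∀ X : Matrix a a ℂ, X.map star = Xᴴᵀ := fun X => by ext; simp
  rw [h, h, Matrix.conjTranspose_nonsing_inv, Matrix.transpose_nonsing_inv]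

lemma map_star_mul {a b c : Type*} [Fintype b] (M : Matrix a b ℂ) (N : Matrix b c ℂ) :
    (M * N).map star = M.map star * N.map star := Matrix.map_mul (f := starRingEnd ℂ)

lemma unit_sub {a : Type*} [Fintype a] [DecidableEq a] {M : Matrix a a ℂ} {s : ℂ}
    (h : s ∉ spectrum ℂ M) : IsUnit (s • (1 : Matrix a a ℂ) - M).det := by
  rw [← Matrix.isUnit_iff_isUnit_det]
  simpa [spectrum.mem_iff, Algebra.algebraMap_eq_smul_one] using h

lemma rank_right_inv {n : ℕ} {κ : Type*} [Fintype κ] (M : Matrix (Fin n) κ ℝ)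
    (h : M.rank = n) : ∃ X : Matrix κ (Fin n) ℝ, M * X = 1 := by
  rw [← Matrix.mulVec_surjective_iff_exists_right_inverse]
  have : LinearMap.range M.mulVecLin = ⊤ := by
    apply Submodule.eq_top_of_finrank_eq
    rw [← Matrix.rank, h]; simp
  exact LinearMap.range_eq_top.1 this

lemma ctrb {n m : ℕ} {A : Matrix (Fin n) (Fin n) ℝ} {B : Matrix (Fin n) (Fin m) ℝ}
    {C : Matrix (Fin m) (Fin n) ℝ} (h : IsMinimal A B C) (s : ℂ) (v : Fin n → ℂ)
    (h1 : v ᵥ* cm A = s • v) (h2 : v ᵥ* cm B = 0) : v = 0 := by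
  obtain ⟨X, hX⟩ := rank_right_inv _ h.1
  have h3 : ∀ k : ℕ, v ᵥ* (cm A ^ k) = s ^ k • v := by
    intro k
    induction k with
    | zero => simp
    | succ k ih => rw [pow_succ, ← Matrix.vecMul_vecMul, ih, Matrix.smul_vecMul, h1, smul_smul,
        pow_succ]
  have h4 : v ᵥ* cm (Matrix.of fun (i : Fin n) (p : Fin n × Fin m) =>
      (A ^ (p.1 : ℕ) * B) i p.2) = 0 := by
    funext p
    have : v ᵥ* cm (A ^ (p.1 : ℕ) * B) = 0 := by
      rw [cm_mul, cm_pow, ← Matrix.vecMul_vecMul, h3, Matrix.smul_vecMul, h2, smul_zero]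
    exact congrFun this p.2
  have h5 := congrArg cm hX
  rw [cm_mul, cm_one] at h5
  rw [← Matrix.vecMul_one v, ← h5, ← Matrix.vecMul_vecMul, h4, Matrix.zero_vecMul]

lemma obsv {n m : ℕ} {A : Matrix (Fin n) (Fin n) ℝ} {B : Matrix (Fin n) (Fin m) ℝ}
    {C : Matrix (Fin m) (Fin n) ℝ} (h : IsMinimal A B C) (s : ℂ) (v : Fin n → ℂ)
    (h1 : s • v = cm A *ᵥ v) (h2 : cm C *ᵥ v = 0) : v = 0 := by
  have hr := h.2
  rw [← Matrix.rank_transpose] at hr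
  obtain ⟨X, hX⟩ := rank_right_inv _ hr
  have h3 : ∀ k : ℕ, (cm A ^ k) *ᵥ v = s ^ k • v := by
    intro k
    induction k with
    | zero => simp
    | succ k ih => rw [pow_succ, ← Matrix.mulVec_mulVec, ← h1, Matrix.mulVec_smul, ih, smul_smul,
        pow_succ, mul_comm]
  have h4 : cm (Matrix.of fun (p : Fin n × Fin m) (i : Fin n) =>
      (C * A ^ (p.1 : ℕ)) p.2 i) *ᵥ v = 0 := by
    funext p
    have : cm (C * A ^ (p.1 : ℕ)) *ᵥ v = 0 := by
      rw [cm_mul, cm_pow, ← Matrix.mulVec_mulVec, h3, Matrix.mulVec_smul, h2, smul_zero]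
    exact congrFun this p.2
  have h5 := congrArg (fun Z => cm Zᵀ) hX
  simp only [Matrix.transpose_mul, Matrix.transpose_transpose, Matrix.transpose_one] at h5
  rw [cm_mul, cm_one] at h5
  rw [← Matrix.one_mulVec v, ← h5, ← Matrix.mulVec_mulVec, h4, Matrix.mulVec_zero]

end Basics

section NIfacts
open Complex Bornology
variable {n m : ℕ} {A : Matrix (Fin n) (Fin n) ℝ} {B : Matrix (Fin n) (Fin m) ℝ}
  {C : Matrix (Fin m) (Fin n) ℝ} {D : Matrix (Fin m) (Fin m) ℝ}

/-- strictly proper part of the transfer function -/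
noncomputable def Gm (A : Matrix (Fin n) (Fin n) ℝ) (B : Matrix (Fin n) (Fin m) ℝ)
    (C : Matrix (Fin m) (Fin n) ℝ) (s : ℂ) : Matrix (Fin m) (Fin m) ℂ :=
  cm C * (s • (1 : Matrix (Fin n) (Fin n) ℂ) - cm A)⁻¹ * cm B

/-- the matrix `R(0) - D` -/
noncomputable def Er (A : Matrix (Fin n) (Fin n) ℝ) (B : Matrix (Fin n) (Fin m) ℝ)
    (C : Matrix (Fin m) (Fin n) ℝ) : Matrix (Fin m) (Fin m) ℝ := -(C * A⁻¹ * B)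

lemma tf_eq (s : ℂ) : tf A B C D s = Gm A B C s + cm D := rfl

lemma Gm_conj (s : ℂ) : Gm A B C (star s) = (Gm A B C s).map star := by
  unfold Gm
  rw [map_star_mul, map_star_mul, map_star_inv, cm_star, cm_star]
  congr 3
  ext i j
  simp [Matrix.one_apply]
  split_ifs <;> simp

lemma spec_conj {s : ℂ} (h : s ∈ spectrum ℂ (cm A)) : star s ∈ spectrum ℂ (cm A) := by
  obtain ⟨v, hv, h1⟩ := (mem_spec_iff _ _).1 h
  refine (mem_spec_iff _ _).2 ⟨star v, by simpa using hv, ?_⟩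
  funext i
  have h2 := congrArg star (congrFun h1 i)
  simpa [mulVec, dotProduct] using h2

lemma IsNI.zero_notMem (h : IsNI A B C D) : (0:ℂ) ∉ spectrum ℂ (cm A) := fun h0 =>
  (h.1 0 h0).1 rfl

lemma cm_Er (h : (0:ℂ) ∉ spectrum ℂ (cm A)) : cm (Er A B C) = -(cm C * (cm A)⁻¹ * cm B) := by
  rw [Er, cm_neg, cm_mul, cm_mul, cm_inv h]

lemma Gm_zero (h : (0:ℂ) ∉ spectrum ℂ (cm A)) : Gm A B C 0 = cm (Er A B C) := by
  rw [cm_Er h, Gm, zero_smul, zero_sub]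
  have : (-cm A)⁻¹ = -(cm A)⁻¹ := by
    apply Matrix.inv_eq_left_inv
    rw [neg_mul_neg]
    exact Matrix.nonsing_inv_mul _ ((Matrix.isUnit_iff_isUnit_det _).1 (unit_of_zero_notMem h))
  rw [this]
  simp

lemma IsNI.im_le (h : IsNI A B C D) (ω : ℝ) (hω : 0 < ω) (hs : I * ω ∉ spectrum ℂ (cm A))
    (u : Fin m → ℂ) : (quad (Gm A B C (I * ω)) u).im + (quad (cm D) u).im ≤ 0 := by
  have h1 := (h.2.1 ω hω hs).dotProduct_mulVec_nonneg u
  change 0 ≤ quad _ u at h1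
  rw [quad_I, tf_eq, quad_add] at h1
  have h2 := Complex.zero_le_real.1 h1
  simp only [Complex.add_im] at h2
  linarith

lemma tendsto_I_atTop : Tendsto (fun x : ℝ => I * (x : ℂ)) atTop (cobounded ℂ) := by
  rw [← tendsto_norm_atTop_iff_cobounded]
  simpa using tendsto_abs_atTop_atTop

lemma IsNI.D_symm (h : IsNI A B C D) : D.IsSymm := by
  apply real_symm
  intro u
  have h1 : Tendsto (fun ω : ℝ => (quad (Gm A B C (I * ω)) u).im + (quad (cm D) u).im) atTop
      (𝓝 (0 + (quad (cm D) u).im)) := by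
    apply Tendsto.add_const
    exact (Complex.continuous_im.tendsto _).comp
      ((tendsto_quad_inv (cm A) (cm C) (cm B) u).comp tendsto_I_atTop)
  rw [zero_add] at h1
  refine le_of_tendsto h1 ?_
  have h2 : ∀ᶠ s in cobounded ℂ, s ∉ spectrum ℂ (cm A) :=
    (Matrix.finite_spectrum (cm A)).isBounded
  filter_upwards [tendsto_I_atTop.eventually h2, eventually_gt_atTop 0] with ω h3 h4
  exact h.im_le ω h4 h3 u

lemma IsNI.D_im (h : IsNI A B C D) (u : Fin m → ℂ) : (quad (cm D) u).im = 0 := by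
  apply quad_im_of_herm
  rw [Matrix.IsHermitian, cm_conjTranspose, h.D_symm.eq]

lemma IsNI.im_le' (h : IsNI A B C D) (ω : ℝ) (hs : I * ω ∉ spectrum ℂ (cm A))
    (u : Fin m → ℂ) : ω * (quad (Gm A B C (I * ω)) u).im ≤ 0 := by
  rcases lt_trichotomy ω 0 with h0 | h0 | h0
  · have e : (I * (ω:ℂ)) = star (I * ((-ω : ℝ) : ℂ)) := by simp
    have hs' : I * ((-ω : ℝ) : ℂ) ∉ spectrum ℂ (cm A) := fun h1 => hs (by rw [e]; exact spec_conj h1)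
    have h1 := h.im_le (-ω) (by linarith) hs' (star u)
    rw [h.D_im] at h1
    rw [e, Gm_conj, quad_star]
    simp only [RCLike.star_def, Complex.conj_im]
    nlinarith
  · simp [h0]
  · have h1 := h.im_le ω h0 hs u
    rw [h.D_im] at h1
    nlinarith

lemma continuousAt_quad_Gm {s : ℂ} (hs : s ∉ spectrum ℂ (cm A)) (u : Fin m → ℂ) :
    ContinuousAt (fun s => quad (Gm A B C s) u) s :=
  (differentiableAt_quad_inv (cm A) (cm C) (cm B) u s hs).continuousAt

lemma IsNI.E_symm (h : IsNI A B C D) : (Er A B C).IsSymm := by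
  apply real_symm
  intro u
  have hp : Tendsto (fun ω : ℝ => I * (ω : ℂ)) (𝓝[>] 0) (𝓝 0) := by
    have : Continuous fun ω : ℝ => I * (ω : ℂ) := by fun_prop
    simpa using (this.tendsto 0).mono_left nhdsWithin_le_nhds
  have h1 : Tendsto (fun ω : ℝ => (quad (Gm A B C (I * ω)) u).im) (𝓝[>] 0)
      (𝓝 (quad (cm (Er A B C)) u).im) := by
    rw [← Gm_zero h.zero_notMem]
    exact (Complex.continuous_im.tendsto _).comp
      ((continuousAt_quad_Gm h.zero_notMem u).tendsto.comp hp)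
  refine le_of_tendsto h1 ?_
  have h2 : ∀ᶠ s in 𝓝 (0:ℂ), s ∉ spectrum ℂ (cm A) :=
    (Matrix.finite_spectrum (cm A)).isClosed.isOpen_compl.mem_nhds h.zero_notMem
  filter_upwards [hp.eventually h2, self_mem_nhdsWithin] with ω h3 h4
  have h5 := h.im_le' ω h3 u
  have h4 : 0 < ω := h4
  by_contra h6
  push Not at h6
  nlinarith

/-- the positive real function associated with a negative imaginary system -/
noncomputable def hfun (A : Matrix (Fin n) (Fin n) ℝ) (B : Matrix (Fin n) (Fin m) ℝ)
    (C : Matrix (Fin m) (Fin n) ℝ) (u : Fin m → ℂ) (s : ℂ) : ℂ :=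
  quad ((-(cm C * (cm A)⁻¹)) * (s • (1 : Matrix (Fin n) (Fin n) ℂ) - cm A)⁻¹ * cm B) u

lemma hfun_eq (h0 : (0:ℂ) ∉ spectrum ℂ (cm A)) (u : Fin m → ℂ) (s : ℂ)
    (hs : s ∉ spectrum ℂ (cm A)) :
    s * hfun A B C u s = quad (cm (Er A B C)) u - quad (Gm A B C s) u := by
  rw [hfun, ← quad_smul, ← quad_sub, cm_Er h0, Gm]
  congr 1
  set M := s • (1 : Matrix (Fin n) (Fin n) ℂ) - cm A with hM
  have hM1 : M * M⁻¹ = 1 := Matrix.mul_nonsing_inv _ (unit_sub hs)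
  have hA1 : (cm A)⁻¹ * cm A = 1 :=
    Matrix.nonsing_inv_mul _ ((Matrix.isUnit_iff_isUnit_det _).1 (unit_of_zero_notMem h0))
  have e : s • ((cm A)⁻¹ * M⁻¹) = (cm A)⁻¹ + M⁻¹ := by
    have : s • (1 : Matrix (Fin n) (Fin n) ℂ) = M + cm A := by rw [hM]; simp
    calc s • ((cm A)⁻¹ * M⁻¹) = (cm A)⁻¹ * (s • (1 : Matrix (Fin n) (Fin n) ℂ)) * M⁻¹ := by simp
      _ = (cm A)⁻¹ * (M * M⁻¹) + ((cm A)⁻¹ * cm A) * M⁻¹ := by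
          rw [this]; simp only [Matrix.mul_add, Matrix.add_mul, Matrix.mul_assoc]
      _ = _ := by rw [hM1, hA1]; simp
  calc s • (-(cm C * (cm A)⁻¹) * M⁻¹ * cm B) = -(cm C * (s • ((cm A)⁻¹ * M⁻¹)) * cm B) := by
        simp [Matrix.mul_assoc]
    _ = _ := by
        rw [e]
        simp only [Matrix.mul_add, Matrix.add_mul, Matrix.mul_assoc]
        abel

lemma IsNI.pole_pos (h : IsNI A B C D) (ω : ℝ) (hω : 0 < ω) (hs : I * ω ∈ spectrum ℂ (cm A))
    (u : Fin m → ℂ) : ∃ k : ℝ, 0 ≤ k ∧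
      Tendsto (fun s => (s - I * ω) * quad (Gm A B C s) u) (𝓝[≠] (I * ω)) (𝓝 (-I * k)) := by
  obtain ⟨K, hK, hK2⟩ := h.2.2 ω hω hs
  have h1 := hK2.dotProduct_mulVec_nonneg u
  change 0 ≤ quad K u at h1
  have h2 : ((quad K u).re : ℂ) = quad K u := by
    apply Complex.ext
    · simp
    · simpa using (Complex.le_def.1 h1).2
  refine ⟨(quad K u).re, (Complex.le_def.1 h1).1, ?_⟩
  rw [h2]
  have h3 := ((continuous_quad u).tendsto K).comp hK
  have h4 : Tendsto (fun s : ℂ => (s - I * ω) * quad (cm D) u) (𝓝[≠] (I * ω)) (𝓝 0) := by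
    have : Continuous fun s : ℂ => (s - I * ω) * quad (cm D) u := by fun_prop
    simpa using (this.tendsto (I * ω)).mono_left nhdsWithin_le_nhds
  have h5 := (h3.const_mul (-I)).sub h4
  rw [sub_zero] at h5
  refine h5.congr fun s => ?_
  simp only [Function.comp, quad_smul, tf_eq, quad_add]
  linear_combination (-(s - I * ω) * (quad (Gm A B C s) u + quad (cm D) u)) * Complex.I_mul_I

lemma IsNI.pole (h : IsNI A B C D) (ω : ℝ) (hs : I * ω ∈ spectrum ℂ (cm A))
    (u : Fin m → ℂ) : ∃ k : ℝ, 0 ≤ k ∧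
      Tendsto (fun s => (s - I * ω) * quad (Gm A B C s) u) (𝓝[≠] (I * ω))
        (𝓝 (-(I * ω) * k)) := by
  have hω0 : ω ≠ 0 := by
    rintro rfl
    exact h.zero_notMem (by simpa using hs)
  rcases lt_or_gt_of_ne hω0 with h0 | h0
  · have e : (I * (ω:ℂ)) = star (I * ((-ω : ℝ) : ℂ)) := by simp
    have e' : (I * ((-ω : ℝ) : ℂ)) = star (I * (ω:ℂ)) := by simp
    have hs' : I * ((-ω : ℝ) : ℂ) ∈ spectrum ℂ (cm A) := by rw [e']; exact spec_conj hs
    obtain ⟨k, hk, hlim⟩ := h.pole_pos (-ω) (by linarith) hs' (star u)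
    refine ⟨k / (-ω), div_nonneg hk (by linarith), ?_⟩
    have hc : Tendsto (fun s : ℂ => star s) (𝓝[≠] (I * ω)) (𝓝[≠] (I * ((-ω : ℝ) : ℂ))) := by
      apply tendsto_nhdsWithin_of_tendsto_nhds_of_eventually_within
      · rw [e']
        exact (continuous_star.tendsto _).mono_left nhdsWithin_le_nhds
      · filter_upwards [self_mem_nhdsWithin] with s hs1 hs2
        apply hs1
        rw [Set.mem_singleton_iff] at hs2 ⊢
        rw [e'] at hs2
        exact star_injective hs2
    have h1 := (continuous_star.tendsto _).comp (hlim.comp hc)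
    have h2 : star (-I * (k:ℂ)) = -(I * ω) * ((k / (-ω) : ℝ) : ℂ) := by
      have : (ω:ℂ) ≠ 0 := by exact_mod_cast hω0
      push_cast
      simp
      field_simp
    rw [h2] at h1
    refine h1.congr fun s => ?_
    simp only [Function.comp, Gm_conj, star_mul', quad_star, star_star, star_sub]
    simp
  · obtain ⟨k, hk, hlim⟩ := h.pole_pos ω h0 hs u
    refine ⟨k / ω, div_nonneg hk h0.le, ?_⟩
    have : (ω:ℂ) ≠ 0 := by exact_mod_cast hω0
    convert hlim using 2
    push_cast
    field_simp

lemma IsNI.h_nonneg (h : IsNI A B C D) (u : Fin m → ℂ) (s : ℂ) (hs : 0 < s.re) :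
    0 ≤ (hfun A B C u s).re := by
  have hsp : ∀ s : ℂ, 0 < s.re → s ∉ spectrum ℂ (cm A) := fun s hs h1 =>
    absurd (h.1 s h1).2 (not_le.2 hs)
  have hdiff : ∀ s, s ∉ spectrum ℂ (cm A) → DifferentiableAt ℂ (hfun A B C u) s := fun s hs =>
    differentiableAt_quad_inv (cm A) _ _ u s hs
  have hax : ∀ ω : ℝ, ω ≠ 0 → I * ω ∉ spectrum ℂ (cm A) → 0 ≤ (hfun A B C u (I * ω)).re := by
    intro ω hω0 hω
    have h1 := hfun_eq (B := B) (C := C) h.zero_notMem u _ hω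
    have h2 := congrArg Complex.im h1
    have h3 : (quad (cm (Er A B C)) u).im = 0 := by
      apply quad_im_of_herm
      rw [Matrix.IsHermitian, cm_conjTranspose, h.E_symm.eq]
    have h4 := h.im_le' ω hω u
    simp [h3] at h2
    have h5' : ω * ω * (hfun A B C u (I * ω)).re = -(ω * (quad (Gm A B C (I * ω)) u).im) := by
      rw [mul_assoc, h2]; ring
    have h5 : 0 ≤ ω * ω * (hfun A B C u (I * ω)).re := by linarith
    exact nonneg_of_mul_nonneg_right h5 (mul_self_pos.2 hω0)
  refine halfplane_nonneg (hfun A B C u) (tendsto_quad_inv _ _ _ _) (fun s hs => hdiff s (hsp s hs))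
    (fun ω η hη => local_nonneg _ (spectrum ℂ (cm A)) (Matrix.finite_spectrum _) hdiff ?_ ?_ ω η hη)
    s hs
  · intro ω hω
    by_cases hω0 : ω = 0
    · subst hω0
      have h1 : ContinuousAt (fun x : ℝ => (hfun A B C u (I * x)).re) 0 := by
        have h2 := (hdiff _ hω).continuousAt
        have h3 : ContinuousAt (fun x : ℝ => I * (x : ℂ)) 0 := by fun_prop
        exact Complex.continuous_re.continuousAt.comp
          (ContinuousAt.comp (f := fun x : ℝ => I * (x : ℂ)) h2 h3)
      refine ge_of_tendsto (h1.tendsto.mono_left (nhdsWithin_le_nhds (s := {0}ᶜ))) ?_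
      have h4 : ∀ᶠ x : ℝ in 𝓝 0, I * (x:ℂ) ∉ spectrum ℂ (cm A) := by
        have h3 : ContinuousAt (fun x : ℝ => I * (x : ℂ)) 0 := by fun_prop
        exact h3.eventually ((Matrix.finite_spectrum (cm A)).isClosed.isOpen_compl.mem_nhds hω)
      filter_upwards [nhdsWithin_le_nhds h4, self_mem_nhdsWithin] with x hx1 hx2
      exact hax x hx2 hx1
    · exact hax ω hω0 hω
  · intro ω hω
    obtain ⟨k, hk, hlim⟩ := h.pole ω hω u
    refine ⟨k, hk, ?_⟩
    have hω0 : I * (ω:ℂ) ≠ 0 := by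
      intro h0
      rw [h0] at hω
      exact h.zero_notMem hω
    have h4 : Tendsto (fun s : ℂ => (s - I * ω) * quad (cm (Er A B C)) u) (𝓝[≠] (I * ω))
        (𝓝 0) := by
      have : Continuous fun s : ℂ => (s - I * ω) * quad (cm (Er A B C)) u := by fun_prop
      simpa using (this.tendsto (I * ω)).mono_left nhdsWithin_le_nhds
    have h5 : Tendsto (fun s : ℂ => s) (𝓝[≠] (I * ω)) (𝓝 (I * ω)) := nhdsWithin_le_nhds
    have h6 := (h4.sub hlim).div h5 hω0
    have e : (0 - -(I * (ω:ℂ)) * (k:ℂ)) / (I * ω) = k := by rw [div_eq_iff hω0]; ring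
    rw [e] at h6
    refine h6.congr' ?_
    have h7 : ∀ᶠ s in 𝓝[≠] (I * (ω:ℂ)), s ∉ spectrum ℂ (cm A) := by
      have hcl : IsClosed (spectrum ℂ (cm A) \ {I * (ω:ℂ)}) :=
        ((Matrix.finite_spectrum (cm A)).subset Set.sdiff_subset).isClosed
      have h8 : ∀ᶠ s in 𝓝 (I * (ω:ℂ)), s ∉ spectrum ℂ (cm A) \ {I * (ω:ℂ)} :=
        hcl.isOpen_compl.mem_nhds (by simp)
      filter_upwards [nhdsWithin_le_nhds h8, self_mem_nhdsWithin] with z h1 h2 h3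
      exact h1 ⟨h3, h2⟩
    filter_upwards [h7, nhdsWithin_le_nhds (isOpen_compl_singleton.mem_nhds hω0)] with z hz hz0
    have h8 := hfun_eq (B := B) (C := C) h.zero_notMem u z hz
    have hz0 : z ≠ 0 := hz0
    simp only [Pi.div_apply]
    rw [div_eq_iff hz0]
    linear_combination (-(z - I * ω)) * h8

lemma IsNI.E_psd (h : IsNI A B C D) : (cm (Er A B C)).PosSemidef := by
  have hH : (cm (Er A B C)).IsHermitian := by
    rw [Matrix.IsHermitian, cm_conjTranspose, h.E_symm.eq]
  refine Matrix.PosSemidef.of_dotProduct_mulVec_nonneg hH fun u => ?_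
  change 0 ≤ quad _ u
  rw [Complex.le_def]
  refine ⟨?_, by simpa using (quad_im_of_herm hH u).symm⟩
  have h1 : Tendsto (fun x : ℝ => (quad (cm (Er A B C)) u).re - (quad (Gm A B C x) u).re) atTop
      (𝓝 ((quad (cm (Er A B C)) u).re - 0)) := by
    apply Tendsto.const_sub
    have := (tendsto_quad_inv (cm A) (cm C) (cm B) u).comp
      (RCLike.tendsto_ofReal_atTop_cobounded ℂ)
    exact (Complex.continuous_re.tendsto _).comp this
  rw [sub_zero] at h1
  refine ge_of_tendsto h1 ?_
  filter_upwards [eventually_gt_atTop 0] with x hx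
  have h2 := h.h_nonneg u x (by simpa using hx)
  have h3 := congrArg Complex.re (hfun_eq (B := B) (C := C) h.zero_notMem u x
    (fun h4 => absurd (h.1 _ h4).2 (by simpa using hx)))
  simp at h3
  change (0:ℝ) ≤ _
  rw [← h3]
  exact mul_nonneg hx.le h2

end NIfacts

section StateFacts
open Complex Bornology
variable {n m : ℕ} {A : Matrix (Fin n) (Fin n) ℝ} {B : Matrix (Fin n) (Fin m) ℝ}
  {C : Matrix (Fin m) (Fin n) ℝ} {D : Matrix (Fin m) (Fin m) ℝ}

lemma solve_state {a : Type*} [Fintype a] [DecidableEq a] {M : Matrix a a ℂ} {s : ℂ}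
    (hs : s ∉ spectrum ℂ M) {x w : a → ℂ} (h : s • x = M *ᵥ x + w) :
    x = (s • (1 : Matrix a a ℂ) - M)⁻¹ *ᵥ w := by
  have h1 : (s • (1 : Matrix a a ℂ) - M) *ᵥ x = w := by
    rw [Matrix.sub_mulVec, Matrix.smul_mulVec, Matrix.one_mulVec, h]; simp
  rw [← h1, Matrix.mulVec_mulVec, Matrix.nonsing_inv_mul _ (unit_sub hs), Matrix.one_mulVec]

lemma exists_state {a : Type*} [Fintype a] [DecidableEq a] {M : Matrix a a ℂ} {s : ℂ}
    (hs : s ∉ spectrum ℂ M) (w : a → ℂ) : ∃ x, s • x = M *ᵥ x + w := by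
  refine ⟨(s • (1 : Matrix a a ℂ) - M)⁻¹ *ᵥ w, ?_⟩
  set x := (s • (1 : Matrix a a ℂ) - M)⁻¹ *ᵥ w with hx
  have h1 : (s • (1 : Matrix a a ℂ) - M) *ᵥ x = w := by
    rw [hx, Matrix.mulVec_mulVec, Matrix.mul_nonsing_inv _ (unit_sub hs), Matrix.one_mulVec]
  rw [Matrix.sub_mulVec, Matrix.smul_mulVec, Matrix.one_mulVec] at h1
  rw [← h1]; simp

lemma IsNI.form0 (h : IsNI A B C D) (ω : ℝ) (hs : I * ω ∉ spectrum ℂ (cm A))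
    {x : Fin n → ℂ} {u : Fin m → ℂ} (hx : (I * (ω:ℂ)) • x = cm A *ᵥ x + cm B *ᵥ u) :
    ω * (star u ⬝ᵥ (cm C *ᵥ x)).im ≤ 0 := by
  have h1 := h.im_le' ω hs u
  rw [solve_state hs hx]
  simpa [quad, Gm, ← Matrix.mulVec_mulVec] using h1

lemma ctrb_inv (h : IsMinimal A B C) (s : ℂ) :
    ∃ (W1 : Matrix (Fin n) (Fin n) ℂ) (W2 : Matrix (Fin m) (Fin n) ℂ),
      (s • (1 : Matrix (Fin n) (Fin n) ℂ) - cm A) * W1 + cm B * W2 = 1 := by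
  set M := Matrix.fromCols (s • (1 : Matrix (Fin n) (Fin n) ℂ) - cm A) (cm B) with hM
  have hinj : Function.Injective M.vecMul := by
    have : Function.Injective (Matrix.vecMulLinear M) := by
      rw [← LinearMap.ker_eq_bot, LinearMap.ker_eq_bot']
      intro v hv
      have hv : v ᵥ* M = 0 := hv
      rw [hM, Matrix.vecMul_fromCols] at hv
      have h1 := congrArg (fun f => f ∘ Sum.inl) hv
      have h2 := congrArg (fun f => f ∘ Sum.inr) hv
      simp only [Sum.elim_comp_inl, Sum.elim_comp_inr] at h1 h2
      refine ctrb h s v ?_ h2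
      have h1 : v ᵥ* (s • (1 : Matrix (Fin n) (Fin n) ℂ) - cm A) = 0 := h1
      rw [Matrix.vecMul_sub, Matrix.vecMul_smul, Matrix.vecMul_one] at h1
      exact (sub_eq_zero.1 h1).symm
    exact this
  have hP := Matrix.PosDef.mul_conjTranspose_self M hinj
  have hu : IsUnit (M * Mᴴ).det := (Matrix.isUnit_iff_isUnit_det _).1 hP.isUnit
  refine ⟨(s • (1 : Matrix (Fin n) (Fin n) ℂ) - cm A)ᴴ * (M * Mᴴ)⁻¹, (cm B)ᴴ * (M * Mᴴ)⁻¹, ?_⟩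
  rw [← Matrix.mul_assoc, ← Matrix.mul_assoc, ← Matrix.add_mul]
  have e : (s • (1 : Matrix (Fin n) (Fin n) ℂ) - cm A) * (s • (1 : Matrix (Fin n) (Fin n) ℂ) - cm A)ᴴ
      + cm B * (cm B)ᴴ = M * Mᴴ := by
    rw [hM, Matrix.conjTranspose_fromCols_eq_fromRows_conjTranspose, Matrix.fromCols_mul_fromRows]
  rw [e, Matrix.mul_nonsing_inv _ hu]

open scoped Matrix.Norms.Operator in
lemma tendsto_inv_one {a : Type*} [Fintype a] [DecidableEq a] (W : Matrix a a ℂ) :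
    Tendsto (fun δ : ℝ => ((1 : Matrix a a ℂ) + (I * (δ:ℂ)) • W)⁻¹) (𝓝 0) (𝓝 1) := by
  have h1 : ContinuousAt (Ring.inverse : Matrix a a ℂ → Matrix a a ℂ) ((1 : (Matrix a a ℂ)ˣ)) :=
    NormedRing.inverse_continuousAt 1
  have h2 : Tendsto (fun δ : ℝ => ((1 : Matrix a a ℂ) + (I * (δ:ℂ)) • W)) (𝓝 0) (𝓝 1) := by
    have : Continuous (fun δ : ℝ => ((1 : Matrix a a ℂ) + (I * (δ:ℂ)) • W)) := by fun_prop
    simpa using this.tendsto 0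
  have h3 := h1.tendsto
  simp only [Units.val_one, Ring.inverse_one] at h3
  refine (h3.comp h2).congr fun δ => ?_
  simp only [Function.comp, Matrix.nonsing_inv_eq_ringInverse]

lemma tendsto_form {a b : Type*} [Fintype a] [Fintype b] (N : Matrix b a ℂ) {l : Filter ℝ}
    {f : ℝ → b → ℂ} {g : ℝ → a → ℂ} {u : b → ℂ} {x : a → ℂ} (hf : Tendsto f l (𝓝 u))
    (hg : Tendsto g l (𝓝 x)) :
    Tendsto (fun δ => (star (f δ) ⬝ᵥ (N *ᵥ (g δ))).im) l (𝓝 (star u ⬝ᵥ (N *ᵥ x)).im) := by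
  have hN : Tendsto (fun δ => N *ᵥ (g δ)) l (𝓝 (N *ᵥ x)) := by
    have h : Continuous fun v : a → ℂ => N *ᵥ v := continuous_const.matrix_mulVec continuous_id
    exact (h.tendsto x).comp hg
  refine (Complex.continuous_im.tendsto _).comp ?_
  simp only [dotProduct]
  refine tendsto_finsetSum _ fun i _ => ?_
  exact ((tendsto_pi_nhds.1 hf i).star).mul (tendsto_pi_nhds.1 hN i)

lemma IsNI.form1 (h : IsNI A B C D) (hmin : IsMinimal A B C) (ω : ℝ)
    {x : Fin n → ℂ} {u : Fin m → ℂ} (hx : (I * (ω:ℂ)) • x = cm A *ᵥ x + cm B *ᵥ u) :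
    ω * (star u ⬝ᵥ (cm C *ᵥ x)).im ≤ 0 := by
  obtain ⟨W1, W2, hW⟩ := ctrb_inv hmin (I * ω)
  have hz := tendsto_inv_one W1
  set Z := fun δ : ℝ => ((1 : Matrix (Fin n) (Fin n) ℂ) + (I * (δ:ℂ)) • W1)⁻¹ with hZ
  have hunit : ∀ᶠ δ : ℝ in 𝓝 0, ((1 : Matrix (Fin n) (Fin n) ℂ) + (I * (δ:ℂ)) • W1) * Z δ = 1 := by
    have hc : Continuous fun δ : ℝ => ((1 : Matrix (Fin n) (Fin n) ℂ) + (I * (δ:ℂ)) • W1).det :=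
      Continuous.matrix_det (by fun_prop)
    have : ∀ᶠ δ : ℝ in 𝓝 0, ((1 : Matrix (Fin n) (Fin n) ℂ) + (I * (δ:ℂ)) • W1).det ≠ 0 :=
      hc.continuousAt.eventually_ne (by simp)
    filter_upwards [this] with δ hδ
    exact Matrix.mul_nonsing_inv _ (isUnit_iff_ne_zero.2 hδ)
  have hspec : ∀ᶠ δ : ℝ in 𝓝[≠] 0, I * ((ω + δ : ℝ) : ℂ) ∉ spectrum ℂ (cm A) := by
    have hf : {δ : ℝ | I * ((ω + δ : ℝ) : ℂ) ∈ spectrum ℂ (cm A)}.Finite := by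
      apply Set.Finite.preimage _ (Matrix.finite_spectrum (cm A))
      intro a _ b _ hab
      simpa using hab
    have hcl : IsClosed ({δ : ℝ | I * ((ω + δ : ℝ) : ℂ) ∈ spectrum ℂ (cm A)} \ {0}) :=
      (hf.subset Set.sdiff_subset).isClosed
    have h8 : ∀ᶠ s in 𝓝 (0:ℝ), s ∉ ({δ : ℝ | I * ((ω + δ : ℝ) : ℂ) ∈ spectrum ℂ (cm A)} \ {0}) :=
      hcl.isOpen_compl.mem_nhds (by simp)
    filter_upwards [nhdsWithin_le_nhds h8, self_mem_nhdsWithin] with z h1 h2 h3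
    exact h1 ⟨h3, h2⟩
  have hzx : Tendsto (fun δ => Z δ *ᵥ x) (𝓝 0) (𝓝 x) := by
    have : Continuous fun N : Matrix (Fin n) (Fin n) ℂ => N *ᵥ x :=
      continuous_id.matrix_mulVec continuous_const
    simpa [Function.comp_def] using (this.tendsto 1).comp hz
  have hu : Tendsto (fun δ : ℝ => u + (I * (δ:ℂ)) • (W2 *ᵥ (Z δ *ᵥ x))) (𝓝 0) (𝓝 u) := by
    have h1 : Tendsto (fun δ : ℝ => I * (δ:ℂ)) (𝓝 0) (𝓝 0) := by
      have : Continuous (fun δ : ℝ => I * (δ:ℂ)) := by fun_prop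
      simpa using this.tendsto 0
    have h2 : Tendsto (fun δ => W2 *ᵥ (Z δ *ᵥ x)) (𝓝 0) (𝓝 (W2 *ᵥ x)) := by
      have : Continuous fun v : Fin n → ℂ => W2 *ᵥ v :=
        continuous_const.matrix_mulVec continuous_id
      exact (this.tendsto x).comp hzx
    simpa using (h1.smul h2).const_add u
  have hform : Tendsto (fun δ : ℝ => (ω + δ) *
      (star (u + (I * (δ:ℂ)) • (W2 *ᵥ (Z δ *ᵥ x))) ⬝ᵥ (cm C *ᵥ (Z δ *ᵥ x))).im) (𝓝 0)
      (𝓝 ((ω + 0) * (star u ⬝ᵥ (cm C *ᵥ x)).im)) := by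
    apply Tendsto.mul
    · exact tendsto_id.const_add ω
    · exact tendsto_form (cm C) hu hzx
  rw [add_zero] at hform
  refine le_of_tendsto (hform.mono_left (nhdsWithin_le_nhds (s := {0}ᶜ))) ?_
  filter_upwards [nhdsWithin_le_nhds hunit, hspec] with δ h1 h2
  refine h.form0 (ω + δ) h2 ?_
  set z := Z δ *ᵥ x with hzdef
  have e1 : x = z + (I * (δ:ℂ)) • (W1 *ᵥ z) := by
    have := congrArg (fun N => N *ᵥ x) h1
    simp only [← Matrix.mulVec_mulVec, Matrix.one_mulVec, Matrix.add_mulVec,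
      Matrix.smul_mulVec] at this
    exact this.symm
  have e2 : (I * (ω:ℂ)) • (W1 *ᵥ z) - cm A *ᵥ (W1 *ᵥ z) + cm B *ᵥ (W2 *ᵥ z) = z := by
    have := congrArg (fun N => N *ᵥ z) hW
    simpa only [Matrix.add_mulVec, ← Matrix.mulVec_mulVec, Matrix.one_mulVec, Matrix.sub_mulVec,
      Matrix.smul_mulVec] using this
  have e3 := hx
  rw [e1] at e3
  simp only [Matrix.mulVec_add, Matrix.mulVec_smul, smul_add] at e3 ⊢
  funext i
  have e3i := congrFun e3 i
  have e2i := congrFun e2 i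
  simp only [Pi.add_apply, Pi.sub_apply, Pi.smul_apply, smul_eq_mul] at e3i e2i ⊢
  push_cast
  linear_combination e3i - (I * δ) * e2i

lemma IsNI.form (h : IsNI A B C D) (hmin : IsMinimal A B C) (ω ε : ℝ) (hε : 0 ≤ ε)
    {x : Fin n → ℂ} {u : Fin m → ℂ}
    (hx : (I * (ω:ℂ)) • x = (cm A - (ε:ℂ) • 1) *ᵥ x + cm B *ᵥ u) :
    ω * (star u ⬝ᵥ ((cm C * (1 - (ε:ℂ) • (cm A)⁻¹)) *ᵥ x)).im ≤ 0 := by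
  rcases hε.eq_or_lt with h0 | h0
  · subst h0
    simp only [Complex.ofReal_zero, zero_smul, sub_zero, Matrix.mul_one] at hx ⊢
    exact h.form1 hmin ω hx
  · have hp : 0 < (I * (ω:ℂ) + ε).re := by simpa using h0
    have hps : I * (ω:ℂ) + ε ∉ spectrum ℂ (cm A) := fun h1 => absurd (h.1 _ h1).2 (not_le.2 hp)
    have hx' : (I * (ω:ℂ) + ε) • x = cm A *ᵥ x + cm B *ᵥ u := by
      rw [add_smul, hx, Matrix.sub_mulVec, Matrix.smul_mulVec, Matrix.one_mulVec]
      abel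
    have h1 := hfun_eq (B := B) (C := C) h.zero_notMem u _ hps
    have h2 := h.h_nonneg u _ hp
    have e : star u ⬝ᵥ ((cm C * (1 - (ε:ℂ) • (cm A)⁻¹)) *ᵥ x) =
        quad (Gm A B C (I * ω + ε)) u + ε * hfun A B C u (I * ω + ε) := by
      rw [hfun, ← quad_smul, ← quad_add, quad, solve_state hps hx', Gm, Matrix.mulVec_mulVec,
        Matrix.mulVec_mulVec]
      congr 2
      simp only [Matrix.mul_sub, Matrix.sub_mul, Matrix.mul_one, Matrix.mul_smul, Matrix.smul_mul,
        Matrix.mul_assoc, Matrix.neg_mul, smul_neg]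
      rw [sub_eq_add_neg]
    have e2 : quad (Gm A B C (I * ω + ε)) u + ε * hfun A B C u (I * ω + ε) =
        quad (cm (Er A B C)) u - I * ω * hfun A B C u (I * ω + ε) := by
      linear_combination h1
    have h3 : (quad (cm (Er A B C)) u).im = 0 := quad_im_of_herm h.E_psd.1 u
    rw [e, e2]
    simp only [Complex.sub_im, h3, Complex.mul_im, Complex.mul_re, Complex.I_re, Complex.I_im,
      Complex.ofReal_re, Complex.ofReal_im]
    nlinarith [mul_nonneg (mul_self_nonneg ω) h2]

lemma IsSNI.isNI (h : IsSNI A B C D) : IsNI A B C D := by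
  refine ⟨fun μ hμ => ⟨?_, (h.1 μ hμ).le⟩, fun ω hω _ => (h.2 ω hω).posSemidef, fun ω hω h1 => ?_⟩
  · rintro rfl
    simpa using h.1 0 hμ
  · have := h.1 _ h1
    simp at this

lemma IsSNI.strict (h : IsSNI A B C D) (ω : ℝ) (hω : ω ≠ 0) {x : Fin n → ℂ} {u : Fin m → ℂ}
    (hu : u ≠ 0) (hx : (I * (ω:ℂ)) • x = cm A *ᵥ x + cm B *ᵥ u) :
    ω * (star u ⬝ᵥ (cm C *ᵥ x)).im < 0 := by
  have hspec : ∀ ω : ℝ, I * ω ∉ spectrum ℂ (cm A) := fun ω h1 => by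
    have := h.1 _ h1
    simp at this
  have key : ∀ ω : ℝ, 0 < ω → ∀ u : Fin m → ℂ, u ≠ 0 → (quad (Gm A B C (I * ω)) u).im < 0 := by
    intro ω hω u hu
    have h1 := (h.2 ω hω).dotProduct_mulVec_pos hu
    change 0 < quad _ u at h1
    rw [quad_I, tf_eq, quad_add] at h1
    have h2 := Complex.zero_lt_real.1 h1
    simp only [Complex.add_im, h.isNI.D_im] at h2
    linarith
  have e0 : star u ⬝ᵥ (cm C *ᵥ x) = quad (Gm A B C (I * ω)) u := by
    rw [solve_state (hspec ω) hx]
    simp [quad, Gm, ← Matrix.mulVec_mulVec]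
  rw [e0]
  rcases lt_or_gt_of_ne hω with h0 | h0
  · have e : (I * (ω:ℂ)) = star (I * ((-ω : ℝ) : ℂ)) := by simp
    have h1 := key (-ω) (by linarith) (star u) (by simpa using hu)
    rw [e, Gm_conj, quad_star]
    simp only [RCLike.star_def, Complex.conj_im]
    nlinarith
  · have h1 := key ω h0 u hu
    nlinarith

end StateFacts

section Modes
open Complex

/-- closed-loop matrix (for `D Ds = 0 = Ds D`) -/
noncomputable def cl {a b k : Type*} [Fintype a] [Fintype b] [Fintype k]
    (A : Matrix a a ℂ) (B : Matrix a k ℂ) (C : Matrix k a ℂ) (D : Matrix k k ℂ)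
    (As : Matrix b b ℂ) (Bs : Matrix b k ℂ) (Cs : Matrix k b ℂ) (Ds : Matrix k k ℂ) :
    Matrix (a ⊕ b) (a ⊕ b) ℂ :=
  Matrix.fromBlocks (A + B * Ds * C) (B * Cs) (Bs * C) (As + Bs * D * Cs)

/-- a mode of the feedback interconnection at `s` -/
structure IsMode {a b k : Type*} [Fintype a] [Fintype b] [Fintype k]
    (A : Matrix a a ℂ) (B : Matrix a k ℂ) (C : Matrix k a ℂ) (D : Matrix k k ℂ)
    (As : Matrix b b ℂ) (Bs : Matrix b k ℂ) (Cs : Matrix k b ℂ) (Ds : Matrix k k ℂ)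
    (s : ℂ) (x : a → ℂ) (xs : b → ℂ) (u y : k → ℂ) : Prop where
  ne : ¬ (x = 0 ∧ xs = 0)
  ex : s • x = A *ᵥ x + B *ᵥ u
  exs : s • xs = As *ᵥ xs + Bs *ᵥ y
  ey : y = C *ᵥ x + D *ᵥ u
  eu : u = Cs *ᵥ xs + Ds *ᵥ y

lemma mem_cl_iff {a b k : Type*} [Fintype a] [Fintype b] [Fintype k] [DecidableEq a]
    [DecidableEq b]
    (A : Matrix a a ℂ) (B : Matrix a k ℂ) (C : Matrix k a ℂ) (D : Matrix k k ℂ)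
    (As : Matrix b b ℂ) (Bs : Matrix b k ℂ) (Cs : Matrix k b ℂ) (Ds : Matrix k k ℂ)
    (h1 : D * Ds = 0) (h2 : Ds * D = 0) (s : ℂ) :
    s ∈ spectrum ℂ (cl A B C D As Bs Cs Ds) ↔
      ∃ x xs u y, IsMode A B C D As Bs Cs Ds s x xs u y := by
  have h1v : ∀ v, D *ᵥ (Ds *ᵥ v) = 0 := fun v => by rw [Matrix.mulVec_mulVec, h1]; simp
  have h2v : ∀ v, Ds *ᵥ (D *ᵥ v) = 0 := fun v => by rw [Matrix.mulVec_mulVec, h2]; simp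
  rw [mem_spec_iff]
  constructor
  · rintro ⟨v, hv, h⟩
    set x := v ∘ Sum.inl with hx
    set xs := v ∘ Sum.inr with hxs
    rw [cl, Matrix.fromBlocks_mulVec] at h
    have e1 := congrArg (fun f => f ∘ Sum.inl) h
    have e2 := congrArg (fun f => f ∘ Sum.inr) h
    simp only [Sum.elim_comp_inl, Sum.elim_comp_inr] at e1 e2
    have e1 : (A + B * Ds * C) *ᵥ x + (B * Cs) *ᵥ xs = s • x := e1
    have e2 : (Bs * C) *ᵥ x + (As + Bs * D * Cs) *ᵥ xs = s • xs := e2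
    simp only [Matrix.add_mulVec, ← Matrix.mulVec_mulVec] at e1 e2
    refine ⟨x, xs, Cs *ᵥ xs + Ds *ᵥ (C *ᵥ x), C *ᵥ x + D *ᵥ (Cs *ᵥ xs), ?_, ?_, ?_, ?_, ?_⟩
    · rintro ⟨h3, h4⟩
      apply hv
      funext i
      rcases i with i | i
      · exact congrFun h3 i
      · exact congrFun h4 i
    · rw [← e1, Matrix.mulVec_add]; abel
    · rw [← e2, Matrix.mulVec_add]; abel
    · rw [Matrix.mulVec_add, h1v]; simp
    · rw [Matrix.mulVec_add, h2v]; simp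
  · rintro ⟨x, xs, u, y, hm⟩
    have hu : u = Cs *ᵥ xs + Ds *ᵥ (C *ᵥ x) := by
      have := hm.eu
      rw [hm.ey, Matrix.mulVec_add, h2v, add_zero] at this
      exact this
    have hy : y = C *ᵥ x + D *ᵥ (Cs *ᵥ xs) := by
      have := hm.ey
      rw [hm.eu, Matrix.mulVec_add, h1v, add_zero] at this
      exact this
    refine ⟨Sum.elim x xs, ?_, ?_⟩
    · intro h
      apply hm.ne
      constructor
      · funext i; exact congrFun h (Sum.inl i)
      · funext i; exact congrFun h (Sum.inr i)
    · rw [cl, Matrix.fromBlocks_mulVec]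
      simp only [Sum.elim_comp_inl, Sum.elim_comp_inr]
      have e1 : (A + B * Ds * C) *ᵥ x + (B * Cs) *ᵥ xs = s • x := by
        rw [hm.ex, hu]
        simp only [Matrix.add_mulVec, ← Matrix.mulVec_mulVec, Matrix.mulVec_add]
        abel
      have e2 : (Bs * C) *ᵥ x + (As + Bs * D * Cs) *ᵥ xs = s • xs := by
        rw [hm.exs, hy]
        simp only [Matrix.add_mulVec, ← Matrix.mulVec_mulVec, Matrix.mulVec_add]
        abel
      rw [e1, e2]
      funext i
      rcases i with i | i <;> rfl

variable {n m : ℕ} {A : Matrix (Fin n) (Fin n) ℝ} {B : Matrix (Fin n) (Fin m) ℝ}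
  {C : Matrix (Fin m) (Fin n) ℝ} {D : Matrix (Fin m) (Fin m) ℝ}

/-- extended state matrix -/
noncomputable def Ax (m : ℕ) (A : Matrix (Fin n) (Fin n) ℝ) (ε : ℝ) :
    Matrix (Fin n ⊕ Fin m) (Fin n ⊕ Fin m) ℂ :=
  Matrix.fromBlocks (cm A - (ε:ℂ) • 1) 0 0 (-1)

/-- extended input matrix -/
noncomputable def Bx (B : Matrix (Fin n) (Fin m) ℝ) : Matrix (Fin n ⊕ Fin m) (Fin m) ℂ :=
  Matrix.fromRows (cm B) 1

/-- extended output matrix -/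
noncomputable def Cx (A : Matrix (Fin n) (Fin n) ℝ) (B : Matrix (Fin n) (Fin m) ℝ)
    (C : Matrix (Fin m) (Fin n) ℝ) (ε t : ℝ) : Matrix (Fin m) (Fin n ⊕ Fin m) ℂ :=
  Matrix.fromCols (((1 - t : ℝ):ℂ) • (cm C * (1 - (ε:ℂ) • (cm A)⁻¹)))
    ((t:ℂ) • cm (Er A B C))

lemma ext_state_iff {ε : ℝ} {s : ℂ} {x : Fin n → ℂ} {x' u : Fin m → ℂ} :
    s • (Sum.elim x x') = Ax m A ε *ᵥ (Sum.elim x x') + Bx B *ᵥ u ↔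
    (s • x = (cm A - (ε:ℂ) • 1) *ᵥ x + cm B *ᵥ u ∧ s • x' = -x' + u) := by
  rw [Ax, Bx, Matrix.fromBlocks_mulVec, Matrix.fromRows_mulVec]
  simp only [Sum.elim_comp_inl, Sum.elim_comp_inr, Matrix.zero_mulVec, add_zero, zero_add,
    Matrix.one_mulVec, Matrix.neg_mulVec]
  constructor
  · intro h
    refine ⟨funext fun i => congrFun h (Sum.inl i), funext fun i => congrFun h (Sum.inr i)⟩
  · rintro ⟨h1, h2⟩
    funext i
    rcases i with i | i
    · exact congrFun h1 i
    · exact congrFun h2 i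

lemma ext_out {ε t : ℝ} {x : Fin n → ℂ} {x' : Fin m → ℂ} :
    Cx A B C ε t *ᵥ (Sum.elim x x') =
      ((1 - t : ℝ):ℂ) • ((cm C * (1 - (ε:ℂ) • (cm A)⁻¹)) *ᵥ x) + (t:ℂ) • (cm (Er A B C) *ᵥ x') := by
  rw [Cx, Matrix.fromCols_mulVec]
  simp only [Sum.elim_comp_inl, Sum.elim_comp_inr, Matrix.smul_mulVec]

lemma elim_eq (X : Fin n ⊕ Fin m → ℂ) : X = Sum.elim (X ∘ Sum.inl) (X ∘ Sum.inr) :=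
  (Sum.elim_comp_inl_inr X).symm

lemma IsNI.E_re (h : IsNI A B C D) (u : Fin m → ℂ) : 0 ≤ (quad (cm (Er A B C)) u).re :=
  (Complex.le_def.1 (h.E_psd.dotProduct_mulVec_nonneg u)).1

lemma IsNI.lag (h : IsNI A B C D) (ω : ℝ) {x' u : Fin m → ℂ}
    (hx : (I * (ω:ℂ)) • x' = -x' + u) :
    ω * (star u ⬝ᵥ (cm (Er A B C) *ᵥ x')).im =
      -(ω ^ 2 / (1 + ω ^ 2)) * (quad (cm (Er A B C)) u).re := by
  have h0 : (1 + I * (ω:ℂ)) ≠ 0 := by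
    intro h1
    have := congrArg Complex.re h1
    simp at this
  have e : u = (1 + I * (ω:ℂ)) • x' := by
    rw [add_smul, hx]; simp
  have e1 : x' = (1 + I * (ω:ℂ))⁻¹ • u := by rw [e, smul_smul, inv_mul_cancel₀ h0, one_smul]
  have e2 : star u ⬝ᵥ (cm (Er A B C) *ᵥ x') = (1 + I * (ω:ℂ))⁻¹ * quad (cm (Er A B C)) u := by
    conv_lhs => rw [e1]
    rw [Matrix.mulVec_smul, dotProduct_smul, quad, smul_eq_mul]
  rw [e2, Complex.mul_im, quad_im_of_herm h.E_psd.1 u]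
  have e3 : ((1 + I * (ω:ℂ))⁻¹).im = -ω / (1 + ω ^ 2) := by
    rw [Complex.inv_im, Complex.normSq_apply]
    simp
    ring
  rw [e3]
  ring

lemma ext_form_aux {ε t ω : ℝ} {x : Fin n → ℂ} {x' u : Fin m → ℂ} :
    ω * (star u ⬝ᵥ (Cx A B C ε t *ᵥ (Sum.elim x x'))).im =
      (1 - t) * (ω * (star u ⬝ᵥ ((cm C * (1 - (ε:ℂ) • (cm A)⁻¹)) *ᵥ x)).im) +
      t * (ω * (star u ⬝ᵥ (cm (Er A B C) *ᵥ x')).im) := by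
  rw [ext_out, dotProduct_add, dotProduct_smul, dotProduct_smul, Complex.add_im, smul_eq_mul,
    smul_eq_mul, Complex.im_ofReal_mul, Complex.im_ofReal_mul]
  ring

lemma IsNI.ext_form (h : IsNI A B C D) (hmin : IsMinimal A B C) {ω ε t : ℝ} (hε : 0 ≤ ε)
    (ht1 : t ≤ 1) {X : Fin n ⊕ Fin m → ℂ} {u : Fin m → ℂ}
    (hx : (I * (ω:ℂ)) • X = Ax m A ε *ᵥ X + Bx B *ᵥ u) :
    ω * (star u ⬝ᵥ (Cx A B C ε t *ᵥ X)).im ≤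
      -(t * (ω ^ 2 / (1 + ω ^ 2)) * (quad (cm (Er A B C)) u).re) := by
  rw [elim_eq X] at hx ⊢
  obtain ⟨h1, h2⟩ := ext_state_iff.1 hx
  rw [ext_form_aux, h.lag ω h2]
  have h3 := h.form hmin ω ε hε h1
  nlinarith [mul_nonneg (sub_nonneg.2 ht1) (neg_nonneg.2 h3)]

lemma IsNI.ext_form' (h : IsNI A B C D) (hmin : IsMinimal A B C) {ω ε t : ℝ} (hε : 0 ≤ ε)
    (ht0 : 0 ≤ t) (ht1 : t ≤ 1) {X : Fin n ⊕ Fin m → ℂ} {u : Fin m → ℂ}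
    (hx : (I * (ω:ℂ)) • X = Ax m A ε *ᵥ X + Bx B *ᵥ u) :
    ω * (star u ⬝ᵥ (Cx A B C ε t *ᵥ X)).im ≤ 0 := by
  have h1 := h.ext_form hmin hε ht1 hx
  have h2 := h.E_re u
  have : 0 ≤ t * (ω ^ 2 / (1 + ω ^ 2)) * (quad (cm (Er A B C)) u).re := by positivity
  linarith

/-- equality at `t = 1` forces `E u = 0` -/
lemma IsNI.ext_one (h : IsNI A B C D) (hmin : IsMinimal A B C) {ω ε : ℝ} (hε : 0 ≤ ε)
    (hω : ω ≠ 0) {X : Fin n ⊕ Fin m → ℂ} {u : Fin m → ℂ}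
    (hx : (I * (ω:ℂ)) • X = Ax m A ε *ᵥ X + Bx B *ᵥ u)
    (h0 : 0 ≤ ω * (star u ⬝ᵥ (Cx A B C ε 1 *ᵥ X)).im) : Cx A B C ε 1 *ᵥ X = 0 := by
  have h1 := h.ext_form hmin hε le_rfl hx
  have h2 := h.E_re u
  have h3 : 0 < ω ^ 2 / (1 + ω ^ 2) := by positivity
  have h4 : (quad (cm (Er A B C)) u).re = 0 := by
    by_contra h5
    have h6 : 0 < (quad (cm (Er A B C)) u).re := lt_of_le_of_ne h2 (Ne.symm h5)
    have := mul_pos h3 h6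
    linarith
  have h5 : cm (Er A B C) *ᵥ u = 0 := by
    rw [← h.E_psd.dotProduct_mulVec_zero_iff]
    apply Complex.ext
    · exact h4
    · exact quad_im_of_herm h.E_psd.1 u
  rw [elim_eq X] at hx ⊢
  obtain ⟨-, h7⟩ := ext_state_iff.1 hx
  set x' := X ∘ Sum.inr
  rw [ext_out]
  have h0 : (1 + I * (ω:ℂ)) ≠ 0 := by
    intro h1
    have := congrArg Complex.re h1
    simp at this
  have e : u = (1 + I * (ω:ℂ)) • x' := by
    rw [add_smul, h7]; simp
  rw [e, Matrix.mulVec_smul, smul_eq_zero] at h5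
  rcases h5 with h5 | h5
  · exact absurd h5 h0
  · simp [h5]

lemma IsSNI.ext_strict (h : IsSNI A B C D) {ω t : ℝ} (hω : ω ≠ 0)
    (ht0 : 0 ≤ t) (ht1 : t < 1) {X : Fin n ⊕ Fin m → ℂ} {u : Fin m → ℂ} (hu : u ≠ 0)
    (hx : (I * (ω:ℂ)) • X = Ax m A 0 *ᵥ X + Bx B *ᵥ u) :
    ω * (star u ⬝ᵥ (Cx A B C 0 t *ᵥ X)).im < 0 := by
  rw [elim_eq X] at hx ⊢
  obtain ⟨h1, h2⟩ := ext_state_iff.1 hx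
  rw [ext_form_aux, h.isNI.lag ω h2]
  simp only [Complex.ofReal_zero, zero_smul, sub_zero, Matrix.mul_one] at h1 ⊢
  have h3 := h.strict ω hω hu h1
  have h4 := h.isNI.E_re u
  have h5 : 0 ≤ t * ((ω ^ 2 / (1 + ω ^ 2)) * (quad (cm (Er A B C)) u).re) := by positivity
  nlinarith [mul_pos (sub_pos.2 ht1) (neg_pos.2 h3)]

lemma ext_dc (h0 : (0:ℂ) ∉ spectrum ℂ (cm A)) {ε t : ℝ} {X : Fin n ⊕ Fin m → ℂ}
    {u : Fin m → ℂ} (hx : (0:ℂ) • X = Ax m A ε *ᵥ X + Bx B *ᵥ u) :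
    Cx A B C ε t *ᵥ X = cm (Er A B C) *ᵥ u := by
  rw [elim_eq X] at hx ⊢
  obtain ⟨h1, h2⟩ := ext_state_iff.1 hx
  rw [ext_out]
  set x := X ∘ Sum.inl
  set x' := X ∘ Sum.inr
  have e1 : x' = u := by
    rw [zero_smul] at h2
    exact (neg_add_eq_zero.1 h2.symm)
  have hA1 : (cm A)⁻¹ * cm A = 1 :=
    Matrix.nonsing_inv_mul _ ((Matrix.isUnit_iff_isUnit_det _).1 (unit_of_zero_notMem h0))
  have e2 : (cm C * (1 - (ε:ℂ) • (cm A)⁻¹)) *ᵥ x = cm (Er A B C) *ᵥ u := by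
    have e3 : (1 - (ε:ℂ) • (cm A)⁻¹) = (cm A)⁻¹ * (cm A - (ε:ℂ) • 1) := by
      rw [Matrix.mul_sub, hA1]; simp
    have e4 : (cm A - (ε:ℂ) • 1) *ᵥ x = - (cm B *ᵥ u) := by
      rw [zero_smul] at h1
      exact eq_neg_of_add_eq_zero_left h1.symm
    rw [e3, ← Matrix.mulVec_mulVec, ← Matrix.mulVec_mulVec, e4, cm_Er h0]
    simp only [Matrix.mulVec_neg, Matrix.neg_mulVec, ← Matrix.mulVec_mulVec]
  rw [e1, e2, ← add_smul]
  push_cast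
  simp

lemma spec_shift {ε : ℝ} {s : ℂ} (hs : s + ε ∉ spectrum ℂ (cm A)) :
    s ∉ spectrum ℂ (cm A - (ε:ℂ) • 1) := by
  intro h
  apply hs
  obtain ⟨v, hv, h1⟩ := (mem_spec_iff _ _).1 h
  refine (mem_spec_iff _ _).2 ⟨v, hv, ?_⟩
  rw [Matrix.sub_mulVec, Matrix.smul_mulVec, Matrix.one_mulVec] at h1
  rw [add_smul, ← h1]; simp

lemma lag_zero {s : ℂ} (hs : 0 ≤ s.re) {x' : Fin m → ℂ} (h : s • x' = -x' + 0) : x' = 0 := by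
  have h1 : (s + 1) • x' = 0 := by rw [add_smul, h]; simp
  rcases smul_eq_zero.1 h1 with h2 | h2
  · have := congrArg Complex.re h2
    simp at this
    linarith
  · exact h2

lemma ext_zero {ε : ℝ} {s : ℂ} (hs : 0 ≤ s.re) (hsp : s + ε ∉ spectrum ℂ (cm A))
    {X : Fin n ⊕ Fin m → ℂ} (hx : s • X = Ax m A ε *ᵥ X + Bx B *ᵥ 0) : X = 0 := by
  rw [elim_eq X] at hx ⊢
  obtain ⟨h1, h2⟩ := ext_state_iff.1 hx
  rw [lag_zero hs h2]
  have h3 := not_mem_spec_zero (spec_shift hsp) (by simpa using h1)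
  rw [h3]
  funext i
  rcases i with i | i <;> rfl

lemma ext_zero' (hmin : IsMinimal A B C) {s : ℂ} (hs : 0 ≤ s.re)
    {X : Fin n ⊕ Fin m → ℂ} (hx : s • X = Ax m A 0 *ᵥ X + Bx B *ᵥ 0)
    (hC : Cx A B C 0 0 *ᵥ X = 0) : X = 0 := by
  rw [elim_eq X] at hx hC ⊢
  obtain ⟨h1, h2⟩ := ext_state_iff.1 hx
  rw [ext_out] at hC
  rw [lag_zero hs h2]
  have h3 : X ∘ Sum.inl = 0 := by
    apply obsv hmin s
    · simpa using h1
    · simpa using hC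
  rw [h3]
  funext i
  rcases i with i | i <;> rfl

lemma ext_exists {ε : ℝ} {s : ℂ} (hs : 0 ≤ s.re) (hsp : s + ε ∉ spectrum ℂ (cm A))
    (u : Fin m → ℂ) : ∃ (x : Fin n → ℂ),
      s • (Sum.elim x ((s + 1)⁻¹ • u)) = Ax m A ε *ᵥ (Sum.elim x ((s + 1)⁻¹ • u)) + Bx B *ᵥ u := by
  obtain ⟨x, hx⟩ := exists_state (spec_shift hsp) (cm B *ᵥ u)
  refine ⟨x, ext_state_iff.2 ⟨hx, ?_⟩⟩
  have h0 : s + 1 ≠ 0 := by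
    intro h
    have := congrArg Complex.re h
    simp at this
    linarith
  have : (s + 1) • ((s + 1)⁻¹ • u) = u := by rw [smul_smul, mul_inv_cancel₀ h0, one_smul]
  rw [add_smul, one_smul] at this
  rw [eq_neg_add_iff_add_eq, add_comm]; exact this

end Modes

section Loop
open Complex
variable {n ns m : ℕ} {A : Matrix (Fin n) (Fin n) ℝ} {B : Matrix (Fin n) (Fin m) ℝ}
  {C : Matrix (Fin m) (Fin n) ℝ} {D : Matrix (Fin m) (Fin m) ℝ}
  {As : Matrix (Fin ns) (Fin ns) ℝ} {Bs : Matrix (Fin ns) (Fin m) ℝ}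
  {Cs : Matrix (Fin m) (Fin ns) ℝ} {Ds : Matrix (Fin m) (Fin m) ℝ}

/-- the homotopy of closed loop matrices -/
noncomputable def clx (A : Matrix (Fin n) (Fin n) ℝ) (B : Matrix (Fin n) (Fin m) ℝ)
    (C : Matrix (Fin m) (Fin n) ℝ) (D : Matrix (Fin m) (Fin m) ℝ)
    (As : Matrix (Fin ns) (Fin ns) ℝ) (Bs : Matrix (Fin ns) (Fin m) ℝ)
    (Cs : Matrix (Fin m) (Fin ns) ℝ) (Ds : Matrix (Fin m) (Fin m) ℝ) (t θ : ℝ) :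
    Matrix ((Fin n ⊕ Fin m) ⊕ (Fin ns ⊕ Fin m)) ((Fin n ⊕ Fin m) ⊕ (Fin ns ⊕ Fin m)) ℂ :=
  cl (Ax m A t) (Bx B) ((θ:ℂ) • Cx A B C t t) ((θ:ℂ) • cm D)
    (Ax m As 0) (Bx Bs) (Cx As Bs Cs 0 t) (cm Ds)

lemma mem_clx_iff (h1 : cm D * cm Ds = 0) (h2 : cm Ds * cm D = 0) (t θ : ℝ) (s : ℂ) :
    s ∈ spectrum ℂ (clx A B C D As Bs Cs Ds t θ) ↔
      ∃ x xs u y, IsMode (Ax m A t) (Bx B) ((θ:ℂ) • Cx A B C t t) ((θ:ℂ) • cm D)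
        (Ax m As 0) (Bx Bs) (Cx As Bs Cs 0 t) (cm Ds) s x xs u y :=
  mem_cl_iff _ _ _ _ _ _ _ _ (by rw [Matrix.smul_mul, h1, smul_zero])
    (by rw [Matrix.mul_smul, h2, smul_zero]) s

lemma IsSNI.notMem (h : IsSNI A B C D) {s : ℂ} (hs : 0 ≤ s.re) : s ∉ spectrum ℂ (cm A) :=
  fun h1 => absurd (h.1 s h1) (not_lt.2 hs)

lemma IsNI.notMem (h : IsNI A B C D) {s : ℂ} (hs : 0 < s.re) : s ∉ spectrum ℂ (cm A) :=
  fun h1 => absurd (h.1 s h1).2 (not_le.2 hs)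

lemma dot_im_swap {a : Type*} [Fintype a] (u y : a → ℂ) :
    (star u ⬝ᵥ y).im = -(star y ⬝ᵥ u).im := by
  have : star u ⬝ᵥ y = star (star y ⬝ᵥ u) := by
    rw [Matrix.star_dotProduct]
  rw [this]; simp

lemma no_imag_mode (hNI : IsNI A B C D) (hSNI : IsSNI As Bs Cs Ds) (hmin : IsMinimal A B C)
    (hmins : IsMinimal As Bs Cs) (h2 : cm Ds * cm D = 0) {t θ ω : ℝ} (ht0 : 0 ≤ t) (ht1 : t ≤ 1)
    (hθ : 0 < θ) (hω : ω ≠ 0) {x : Fin n ⊕ Fin m → ℂ} {xs : Fin ns ⊕ Fin m → ℂ}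
    {u y : Fin m → ℂ}
    (hm : IsMode (Ax m A t) (Bx B) ((θ:ℂ) • Cx A B C t t) ((θ:ℂ) • cm D)
        (Ax m As 0) (Bx Bs) (Cx As Bs Cs 0 t) (cm Ds) (I * ω) x xs u y) : False := by
  obtain ⟨hne, ex, exs, ey, eu⟩ := hm
  have hs0 : 0 ≤ (I * (ω:ℂ)).re := by simp
  have hθ' : (θ:ℂ) ≠ 0 := by exact_mod_cast hθ.ne'
  set a := (star u ⬝ᵥ (Cx A B C t t *ᵥ x)).im with ha
  set b := (star y ⬝ᵥ (Cx As Bs Cs 0 t *ᵥ xs)).im with hb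
  have ha0 : ω * a ≤ 0 := hNI.ext_form' hmin ht0 ht0 ht1 ex
  have hb0 : ω * b ≤ 0 := hSNI.isNI.ext_form' hmins le_rfl ht0 ht1 exs
  have e1 : (star u ⬝ᵥ y).im = θ * a := by
    rw [ey, dotProduct_add, Matrix.smul_mulVec, Matrix.smul_mulVec, dotProduct_smul,
      dotProduct_smul, Complex.add_im, smul_eq_mul, smul_eq_mul, Complex.im_ofReal_mul,
      Complex.im_ofReal_mul]
    have := hNI.D_im u
    rw [quad] at this
    rw [this]; ring
  have e2 : (star y ⬝ᵥ u).im = b := by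
    rw [eu, dotProduct_add, Complex.add_im]
    have := hSNI.isNI.D_im y
    rw [quad] at this
    rw [this]; ring
  have e3 := dot_im_swap u y
  rw [e1, e2] at e3
  have e4 : θ * (ω * a) = -(ω * b) := by linear_combination ω * e3
  have e5 : ω * b = 0 := by nlinarith [mul_nonneg hθ.le (neg_nonneg.2 ha0)]
  have e6 : ω * a = 0 := by
    rw [e5, neg_zero] at e4
    exact (mul_eq_zero.1 e4).resolve_left hθ.ne'
  have huy : u = 0 ∧ y = 0 := by
    rcases ht1.lt_or_eq with hlt | rfl
    · have hy : y = 0 := by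
        by_contra hy
        have := hSNI.ext_strict hω ht0 hlt hy exs
        linarith
      subst hy
      have := ext_zero hs0 (hSNI.notMem (by simp)) exs
      rw [this] at eu
      simpa using eu
    · have h3 := hNI.ext_one hmin zero_le_one hω ex e6.ge
      have h4 := hSNI.isNI.ext_one hmins le_rfl hω exs e5.ge
      rw [Matrix.smul_mulVec, h3, smul_zero, zero_add] at ey
      rw [h4, zero_add] at eu
      have h5 : u = 0 := by
        rw [eu, ey, Matrix.mulVec_mulVec, Matrix.mul_smul, h2]; simp
      refine ⟨h5, ?_⟩
      rw [ey, h5]; simp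
  obtain ⟨rfl, rfl⟩ := huy
  apply hne
  refine ⟨?_, ext_zero hs0 (hSNI.notMem (by simp)) exs⟩
  rcases ht0.eq_or_lt with h0 | h0
  · subst h0
    apply ext_zero' hmin hs0 ex
    rw [Matrix.mulVec_zero, add_zero, Matrix.smul_mulVec] at ey
    exact (smul_eq_zero.1 ey.symm).resolve_left hθ'
  · exact ext_zero hs0 (hNI.notMem (by simpa using h0)) ex

lemma zero_mode (hNI : IsNI A B C D) (hSNI : IsSNI As Bs Cs Ds) {t θ : ℝ} (ht0 : 0 ≤ t)
    (hθ : 0 < θ) {x : Fin n ⊕ Fin m → ℂ} {xs : Fin ns ⊕ Fin m → ℂ}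
    {u y : Fin m → ℂ}
    (hm : IsMode (Ax m A t) (Bx B) ((θ:ℂ) • Cx A B C t t) ((θ:ℂ) • cm D)
        (Ax m As 0) (Bx Bs) (Cx As Bs Cs 0 t) (cm Ds) 0 x xs u y) :
    ((θ⁻¹ : ℝ) : ℂ) ∈ spectrum ℂ ((cm D + cm (Er A B C)) * (cm Ds + cm (Er As Bs Cs))) := by
  obtain ⟨hne, ex, exs, ey, eu⟩ := hm
  have hθ' : (θ:ℂ) ≠ 0 := by exact_mod_cast hθ.ne'
  rw [ext_dc hSNI.isNI.zero_notMem exs, ← Matrix.add_mulVec, add_comm] at eu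
  rw [Matrix.smul_mulVec, ext_dc hNI.zero_notMem ex, Matrix.smul_mulVec, ← smul_add,
    ← Matrix.add_mulVec, add_comm] at ey
  refine (mem_spec_iff _ _).2 ⟨y, ?_, ?_⟩
  · rintro rfl
    rw [Matrix.mulVec_zero] at eu
    subst eu
    apply hne
    refine ⟨ext_zero (by simp) ?_ ex, ext_zero (by simp) (hSNI.notMem (by simp)) exs⟩
    rcases ht0.eq_or_lt with h0 | h0
    · subst h0; simpa using hNI.zero_notMem
    · exact hNI.notMem (by simpa using h0)
  · rw [← Matrix.mulVec_mulVec, ← eu]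
    conv_rhs => rw [ey]
    rw [smul_smul]
    push_cast
    rw [inv_mul_cancel₀ hθ', one_smul]

lemma continuous_clx : Continuous fun p : ℝ × ℝ => clx A B C D As Bs Cs Ds p.1 p.2 := by
  have hA : Continuous fun p : ℝ × ℝ => Ax m A p.1 := by
    unfold Ax
    refine Continuous.matrix_fromBlocks ?_ continuous_const continuous_const continuous_const
    fun_prop
  have hC : ∀ {k : ℕ} (A : Matrix (Fin k) (Fin k) ℝ) (B : Matrix (Fin k) (Fin m) ℝ)
      (C : Matrix (Fin m) (Fin k) ℝ) (f : ℝ × ℝ → ℝ), Continuous f →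
      Continuous fun p : ℝ × ℝ => Cx A B C (f p) p.1 := by
    intro k A B C f hf
    have hc1 : Continuous fun p : ℝ × ℝ => ((1 - p.1 : ℝ) : ℂ) := by fun_prop
    have hc2 : Continuous fun p : ℝ × ℝ => (p.1 : ℂ) := by fun_prop
    unfold Cx
    refine continuous_matrix fun i j => ?_
    rcases j with j | j
    · simp only [Matrix.fromCols_apply_inl]
      refine Continuous.matrix_elem ?_ i j
      exact hc1.smul (continuous_const.matrix_mul
        (continuous_const.sub ((Complex.continuous_ofReal.comp hf).smul continuous_const)))
    · simp only [Matrix.fromCols_apply_inr]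
      refine Continuous.matrix_elem ?_ i j
      exact hc2.smul continuous_const
  have h1 := hC A B C (fun p => p.1) continuous_fst
  have h2 := hC As Bs Cs (fun _ => 0) continuous_const
  have hθ : Continuous fun p : ℝ × ℝ => (p.2 : ℂ) := by fun_prop
  unfold clx cl
  refine Continuous.matrix_fromBlocks ?_ ?_ ?_ ?_
  · exact hA.add (continuous_const.matrix_mul (hθ.smul h1))
  · exact continuous_const.matrix_mul h2
  · exact continuous_const.matrix_mul (hθ.smul h1)
  · exact continuous_const.add ((continuous_const.matrix_mul (hθ.smul continuous_const)).matrix_mul h2)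

lemma continuous_clx_path {f g : ℝ → ℝ} (hf : Continuous f) (hg : Continuous g) :
    Continuous fun t : ℝ => clx A B C D As Bs Cs Ds (f t) (g t) :=
  Continuous.comp (g := fun p : ℝ × ℝ => clx A B C D As Bs Cs Ds p.1 p.2)
    (f := fun t => (f t, g t)) continuous_clx (hf.prodMk hg)

lemma clx_imag (hNI : IsNI A B C D) (hSNI : IsSNI As Bs Cs Ds) (hmin : IsMinimal A B C)
    (hmins : IsMinimal As Bs Cs) (h1 : cm D * cm Ds = 0) (h2 : cm Ds * cm D = 0) {t θ : ℝ}
    (ht0 : 0 ≤ t) (ht1 : t ≤ 1) (hθ : 0 < θ)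
    (hs : ((θ⁻¹ : ℝ) : ℂ) ∉ spectrum ℂ ((cm D + cm (Er A B C)) * (cm Ds + cm (Er As Bs Cs))))
    (μ : ℂ) (hμ : μ ∈ spectrum ℂ (clx A B C D As Bs Cs Ds t θ)) : μ.re ≠ 0 := by
  intro h0
  obtain ⟨x, xs, u, y, hm⟩ := (mem_clx_iff h1 h2 t θ μ).1 hμ
  have e : μ = I * (μ.im : ℂ) := by apply Complex.ext <;> simp [h0]
  by_cases hi : μ.im = 0
  · rw [hi] at e
    simp only [Complex.ofReal_zero, mul_zero] at e
    subst e
    exact hs (zero_mode hNI hSNI ht0 hθ hm)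
  · rw [e] at hm
    exact no_imag_mode hNI hSNI hmin hmins h2 ht0 ht1 hθ hi hm

lemma clx_theta_zero (hNI : IsNI A B C D) (hSNI : IsSNI As Bs Cs Ds)
    (h1 : cm D * cm Ds = 0) (h2 : cm Ds * cm D = 0)
    (μ : ℂ) (hμ : μ ∈ spectrum ℂ (clx A B C D As Bs Cs Ds 1 0)) : μ.re < 0 := by
  by_contra hs
  push Not at hs
  obtain ⟨x, xs, u, y, hne, ex, exs, ey, eu⟩ := (mem_clx_iff h1 h2 1 0 μ).1 hμ
  have hy : y = 0 := by simpa using ey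
  subst hy
  have hxs := ext_zero hs (hSNI.notMem (by simpa using hs)) exs
  have hu : u = 0 := by simpa [hxs] using eu
  subst hu
  exact hne ⟨ext_zero hs (hNI.notMem (by simp; linarith)) ex, hxs⟩

/-- eigenvalues of the product of a Hermitian and a positive semidefinite matrix are real -/
lemma herm_psd_real {a : Type*} [Fintype a] [DecidableEq a] {T P : Matrix a a ℂ}
    (hT : T.IsHermitian) (hP : P.PosSemidef) {μ : ℂ} (hμ : μ ∈ spectrum ℂ (T * P)) :
    μ.im = 0 := by
  obtain ⟨y, hy, h⟩ := (mem_spec_iff _ _).1 hμ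
  have hq : quad (P * T * P) y = μ * quad P y := by
    rw [quad, Matrix.mul_assoc, ← Matrix.mulVec_mulVec, h, Matrix.mulVec_smul, dotProduct_smul,
      quad, smul_eq_mul]
  have hH : (P * T * P).IsHermitian := by
    rw [Matrix.IsHermitian, Matrix.conjTranspose_mul, Matrix.conjTranspose_mul, hP.1.eq, hT.eq,
      Matrix.mul_assoc]
  have h3 := congrArg Complex.im hq
  rw [quad_im_of_herm hH, Complex.mul_im, quad_im_of_herm hP.1] at h3
  by_cases h4 : (quad P y).re = 0
  · have h5 : P *ᵥ y = 0 := by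
      rw [← hP.dotProduct_mulVec_zero_iff]
      exact Complex.ext h4 (quad_im_of_herm hP.1 y)
    rw [← Matrix.mulVec_mulVec, h5, Matrix.mulVec_zero] at h
    have := (smul_eq_zero.1 h.symm).resolve_right hy
    simp [this]
  · have : μ.im * (quad P y).re = 0 := by linarith
    exact (mul_eq_zero.1 this).resolve_right h4

/-- stability of the loop at `t = 1` forces the dc gain condition -/
lemma gain_of_clx (hNI : IsNI A B C D) (hSNI : IsSNI As Bs Cs Ds)
    (hDs : (cm Ds).PosSemidef) (h1 : cm D * cm Ds = 0) (h2 : cm Ds * cm D = 0)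
    (hH : ∀ μ ∈ spectrum ℂ (clx A B C D As Bs Cs Ds 1 1), μ.re < 0)
    (μ : ℂ) (hμ : μ ∈ spectrum ℂ ((cm D + cm (Er A B C)) * (cm Ds + cm (Er As Bs Cs)))) :
    μ.re < 1 := by
  set E := cm (Er A B C) with hE
  set Es := cm (Er As Bs Cs) with hEs
  let M : ℝ → Matrix (Fin m) (Fin m) ℂ := fun z =>
    (cm D + (z:ℂ) • E) * (cm Ds + (z:ℂ) • Es) - 1
  have shift : ∀ (N : Matrix (Fin m) (Fin m) ℂ) (ν : ℂ),
      ν ∈ spectrum ℂ (N - 1) → ν + 1 ∈ spectrum ℂ N := by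
    intro N ν h
    obtain ⟨v, hv, h3⟩ := (mem_spec_iff _ _).1 h
    refine (mem_spec_iff _ _).2 ⟨v, hv, ?_⟩
    rw [Matrix.sub_mulVec, Matrix.one_mulVec, sub_eq_iff_eq_add] at h3
    rw [h3, add_smul, one_smul]
  have hM : Continuous M := by
    refine Continuous.sub (Continuous.matrix_mul ?_ ?_) continuous_const <;> fun_prop
  have hDh : (cm D).IsHermitian := by
    rw [Matrix.IsHermitian, cm_conjTranspose, hNI.D_symm.eq]
  have key := path_hurwitz M hM ?_ ?_ (μ - 1) ?_
  · simp at key; linarith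
  · intro z hz ν hν h0
    have hz0 : (0:ℂ) ≤ (z:ℂ) := by exact_mod_cast hz.1
    have hTh : (cm D + (z:ℂ) • E).IsHermitian := by
      refine hDh.add (Matrix.PosSemidef.smul hNI.E_psd hz0).1
    have hPp : (cm Ds + (z:ℂ) • Es).PosSemidef :=
      hDs.add (Matrix.PosSemidef.smul hSNI.isNI.E_psd hz0)
    have h3 := shift _ ν hν
    have h4 := herm_psd_real hTh hPp h3
    have h5 : ν = 0 := by
      apply Complex.ext
      · simpa using h0
      · simpa using h4
    subst h5
    rw [zero_add] at h3
    obtain ⟨y, hy, h6⟩ := (mem_spec_iff _ _).1 h3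
    rw [one_smul, ← Matrix.mulVec_mulVec] at h6
    rcases hz.1.eq_or_lt with hz' | hz'
    · subst hz'
      apply hy
      simp only [Complex.ofReal_zero, zero_smul, add_zero, Matrix.mulVec_mulVec, h1] at h6
      simpa using h6.symm
    · set u := (cm Ds + (z:ℂ) • Es) *ᵥ y with hu
      have hzc : (z:ℂ) ≠ 0 := by exact_mod_cast hz'.ne'
      set s : ℂ := ((z⁻¹ - 1 : ℝ) : ℂ) with hs
      have hsr : 0 ≤ s.re := by
        rw [hs, Complex.ofReal_re]
        have := (one_le_inv₀ hz').2 hz.2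
        linarith
      have hs1 : (s + 1)⁻¹ = z := by rw [hs]; push_cast; simp
      obtain ⟨x, hx⟩ := ext_exists (A := A) (B := B) (ε := 1) hsr
        (hNI.notMem (by simp; linarith)) u
      obtain ⟨xs, hxs⟩ := ext_exists (A := As) (B := Bs) (ε := 0) hsr
        (hSNI.notMem (by simpa using hsr)) y
      rw [hs1] at hx hxs
      have hmode : s ∈ spectrum ℂ (clx A B C D As Bs Cs Ds 1 1) := by
        refine (mem_clx_iff h1 h2 1 1 s).2 ⟨_, _, u, y, ?_, hx, hxs, ?_, ?_⟩
        · rintro ⟨-, h7⟩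
          have h8 : (z:ℂ) • y = 0 := funext fun i => congrFun h7 (Sum.inr i)
          exact hy ((smul_eq_zero.1 h8).resolve_left hzc)
        · rw [Complex.ofReal_one, one_smul, one_smul, ext_out]
          conv_lhs => rw [← h6]
          simp [Matrix.add_mulVec, Matrix.smul_mulVec, Matrix.mulVec_smul, ← hE, add_comm]
        · rw [ext_out, hu]
          simp [Matrix.add_mulVec, Matrix.smul_mulVec, Matrix.mulVec_smul, ← hEs, add_comm]
      exact absurd (hH s hmode) (not_lt.2 hsr)
  · intro ν hν
    have h3 := shift _ ν hν
    simp only [Complex.ofReal_zero, zero_smul, add_zero, h1] at h3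
    obtain ⟨y, hy, h6⟩ := (mem_spec_iff _ _).1 h3
    rw [Matrix.zero_mulVec] at h6
    have := (smul_eq_zero.1 h6.symm).resolve_right hy
    have := congrArg Complex.re this
    simp at this
    linarith
  · obtain ⟨y, hy, h6⟩ := (mem_spec_iff _ _).1 hμ
    refine (mem_spec_iff _ _).2 ⟨y, hy, ?_⟩
    simp only [M, Complex.ofReal_one, one_smul]
    rw [Matrix.sub_mulVec, h6, Matrix.one_mulVec, sub_smul, one_smul]

/-- the original loop versus the extended loop at `t = 0` -/
lemma hurwitz_ext_iff (h1 : cm D * cm Ds = 0) (h2 : cm Ds * cm D = 0) :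
    (∀ μ ∈ spectrum ℂ (cl (cm A) (cm B) (cm C) (cm D) (cm As) (cm Bs) (cm Cs) (cm Ds)), μ.re < 0) ↔
    (∀ μ ∈ spectrum ℂ (clx A B C D As Bs Cs Ds 0 1), μ.re < 0) := by
  constructor
  · intro H μ hμ
    by_contra hs
    push Not at hs
    obtain ⟨X, Xs, u, y, hne, ex, exs, ey, eu⟩ := (mem_clx_iff h1 h2 0 1 μ).1 hμ
    rw [elim_eq X] at ex ey
    rw [elim_eq Xs] at exs eu
    rw [Matrix.smul_mulVec, ext_out] at ey
    rw [ext_out] at eu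
    obtain ⟨ex1, ex2⟩ := ext_state_iff.1 ex
    obtain ⟨exs1, exs2⟩ := ext_state_iff.1 exs
    simp only [Complex.ofReal_zero, Complex.ofReal_one, zero_smul, sub_zero, one_smul,
      Matrix.mul_one, add_zero] at ex1 exs1 ey eu
    refine absurd (H μ ?_) (not_lt.2 hs)
    refine (mem_cl_iff _ _ _ _ _ _ _ _ h1 h2 μ).2
      ⟨X ∘ Sum.inl, Xs ∘ Sum.inl, u, y, ?_, ex1, exs1, ey, eu⟩
    rintro ⟨hx, hxs⟩
    rw [hx, Matrix.mulVec_zero, zero_add] at ey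
    rw [hxs, Matrix.mulVec_zero, zero_add] at eu
    have hu : u = 0 := by rw [eu, ey, Matrix.mulVec_mulVec, h2, Matrix.zero_mulVec]
    have hy : y = 0 := by rw [ey, hu, Matrix.mulVec_zero]
    rw [hu] at ex2
    rw [hy] at exs2
    apply hne
    rw [elim_eq X, elim_eq Xs, lag_zero hs ex2, lag_zero hs exs2, hx, hxs]
    constructor <;> (funext i; rcases i with i | i <;> rfl)
  · intro H μ hμ
    by_contra hs
    push Not at hs
    obtain ⟨x, xs, u, y, hne, ex, exs, ey, eu⟩ := (mem_cl_iff _ _ _ _ _ _ _ _ h1 h2 μ).1 hμ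
    refine absurd (H μ ?_) (not_lt.2 hs)
    have hl : ∀ w : Fin m → ℂ, μ • ((μ + 1)⁻¹ • w) = -((μ + 1)⁻¹ • w) + w := by
      intro w
      have h0 : μ + 1 ≠ 0 := by
        intro h
        have := congrArg Complex.re h
        simp at this
        linarith
      have : (μ + 1) • ((μ + 1)⁻¹ • w) = w := by rw [smul_smul, mul_inv_cancel₀ h0, one_smul]
      rw [add_smul, one_smul] at this
      rw [eq_neg_add_iff_add_eq, add_comm]; exact this
    refine (mem_clx_iff h1 h2 0 1 μ).2 ⟨Sum.elim x ((μ + 1)⁻¹ • u), Sum.elim xs ((μ + 1)⁻¹ • y),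
      u, y, ?_, ext_state_iff.2 ⟨by simpa using ex, hl u⟩,
      ext_state_iff.2 ⟨by simpa using exs, hl y⟩, ?_, ?_⟩
    · rintro ⟨h3, h4⟩
      apply hne
      exact ⟨funext fun i => congrFun h3 (Sum.inl i), funext fun i => congrFun h4 (Sum.inl i)⟩
    · rw [Matrix.smul_mulVec, ext_out]; simpa using ey
    · rw [ext_out]; simpa using eu

lemma one_notMem (hNI : IsNI A B C D) (hSNI : IsSNI As Bs Cs Ds)
    (h1 : cm D * cm Ds = 0) (h2 : cm Ds * cm D = 0)
    (H : ∀ μ ∈ spectrum ℂ (clx A B C D As Bs Cs Ds 0 1), μ.re < 0) :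
    (1:ℂ) ∉ spectrum ℂ ((cm D + cm (Er A B C)) * (cm Ds + cm (Er As Bs Cs))) := by
  intro h
  obtain ⟨y, hy, h6⟩ := (mem_spec_iff _ _).1 h
  rw [one_smul, ← Matrix.mulVec_mulVec] at h6
  set u := (cm Ds + cm (Er As Bs Cs)) *ᵥ y with hu
  obtain ⟨x, hx⟩ := ext_exists (A := A) (B := B) (ε := 0) (s := 0) le_rfl
    (by simpa using hNI.zero_notMem) u
  obtain ⟨xs, hxs⟩ := ext_exists (A := As) (B := Bs) (ε := 0) (s := 0) le_rfl
    (by simpa using hSNI.isNI.zero_notMem) y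
  have hmode : (0:ℂ) ∈ spectrum ℂ (clx A B C D As Bs Cs Ds 0 1) := by
    refine (mem_clx_iff h1 h2 0 1 0).2 ⟨_, _, u, y, ?_, hx, hxs, ?_, ?_⟩
    · rintro ⟨-, h7⟩
      apply hy
      funext i
      simpa using congrFun h7 (Sum.inr i)
    · rw [Complex.ofReal_one, one_smul, one_smul, ext_dc hNI.zero_notMem hx, ← Matrix.add_mulVec,
        add_comm, h6]
    · rw [ext_dc hSNI.isNI.zero_notMem hxs, ← Matrix.add_mulVec, add_comm]
  simpa using H 0 hmode

lemma loop_iff (hNI : IsNI A B C D) (hSNI : IsSNI As Bs Cs Ds) (hmin : IsMinimal A B C)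
    (hmins : IsMinimal As Bs Cs) (hDs : (cm Ds).PosSemidef)
    (h1 : cm D * cm Ds = 0) (h2 : cm Ds * cm D = 0) :
    (∀ μ ∈ spectrum ℂ (cl (cm A) (cm B) (cm C) (cm D) (cm As) (cm Bs) (cm Cs) (cm Ds)), μ.re < 0) ↔
    (∀ μ ∈ spectrum ℂ ((cm D + cm (Er A B C)) * (cm Ds + cm (Er As Bs Cs))), μ.re < 1) := by
  rw [hurwitz_ext_iff h1 h2]
  constructor
  · intro H
    have h3 := one_notMem hNI hSNI h1 h2 H
    refine gain_of_clx hNI hSNI hDs h1 h2 ?_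
    refine path_hurwitz (fun t => clx A B C D As Bs Cs Ds t 1)
      (continuous_clx_path continuous_id continuous_const) ?_ H
    intro t ht
    exact clx_imag hNI hSNI hmin hmins h1 h2 ht.1 ht.2 one_pos (by simpa using h3)
  · intro H
    have h11 : ∀ μ ∈ spectrum ℂ (clx A B C D As Bs Cs Ds 1 1), μ.re < 0 := by
      refine path_hurwitz (fun θ => clx A B C D As Bs Cs Ds 1 θ)
        (continuous_clx_path continuous_const continuous_id) ?_
        (clx_theta_zero hNI hSNI h1 h2)
      intro θ hθ μ hμ
      rcases hθ.1.eq_or_lt with h0 | h0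
      · subst h0
        exact (clx_theta_zero hNI hSNI h1 h2 μ hμ).ne
      · refine clx_imag hNI hSNI hmin hmins h1 h2 zero_le_one le_rfl h0 (fun h3 => ?_) μ hμ
        have h4 := H _ h3
        rw [Complex.ofReal_re] at h4
        exact absurd ((one_le_inv₀ h0).2 hθ.2) (not_le.2 h4)
    have h3 : (1:ℂ) ∉ spectrum ℂ ((cm D + cm (Er A B C)) * (cm Ds + cm (Er As Bs Cs))) :=
      fun h => by simpa using H 1 h
    have := path_hurwitz (fun t => clx A B C D As Bs Cs Ds (1 - t) 1)
      (continuous_clx_path (continuous_const.sub continuous_id) continuous_const) ?_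
      (by simpa using h11)
    · simpa using this
    · intro t ht
      exact clx_imag hNI hSNI hmin hmins h1 h2 (by linarith [ht.2]) (by linarith [ht.1]) one_pos
        (by simpa using h3)

end Loop

/-- Main NI stability theorem: the positive feedback interconnection of an NI system and an
SNI system is internally stable iff the dc loop gain eigenvalues are less than one. -/
theorem ni_sni_stability {n ns m : ℕ}
    (A : Matrix (Fin n) (Fin n) ℝ) (B : Matrix (Fin n) (Fin m) ℝ)
    (C : Matrix (Fin m) (Fin n) ℝ) (D : Matrix (Fin m) (Fin m) ℝ)
    (As : Matrix (Fin ns) (Fin ns) ℝ) (Bs : Matrix (Fin ns) (Fin m) ℝ)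
    (Cs : Matrix (Fin m) (Fin ns) ℝ) (Ds : Matrix (Fin m) (Fin m) ℝ)
    (hmin : IsMinimal A B C) (hmins : IsMinimal As Bs Cs)
    (hNI : IsNI A B C D) (hSNI : IsSNI As Bs Cs Ds)
    (hDDs : D * Ds = 0) (hDs : Ds.PosSemidef) :
    IsUnit (1 - Ds * D) ∧ IsUnit (1 - D * Ds) ∧
    (∀ μ ∈ eigs ((D - C * A⁻¹ * B) * (Ds - Cs * As⁻¹ * Bs)), μ.im = 0) ∧
    (IsHurwitz (Matrix.fromBlocks
        (A + B * (1 - Ds * D)⁻¹ * Ds * C) (B * (1 - Ds * D)⁻¹ * Cs)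
        (Bs * (1 - D * Ds)⁻¹ * C) (As + Bs * (1 - D * Ds)⁻¹ * D * Cs)) ↔
      ∀ μ ∈ eigs ((D - C * A⁻¹ * B) * (Ds - Cs * As⁻¹ * Bs)), μ.re < 1) := by
  have hDsym := hNI.D_symm
  have hDssym : Dsᵀ = Ds := by simpa using hDs.1.eq
  have hDsD : Ds * D = 0 := by
    have := congrArg Matrix.transpose hDDs
    rwa [Matrix.transpose_mul, hDssym, hDsym.eq, Matrix.transpose_zero] at this
  have h1 : cm D * cm Ds = 0 := by rw [← cm_mul, hDDs, cm_zero]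
  have h2 : cm Ds * cm D = 0 := by rw [← cm_mul, hDsD, cm_zero]
  have hDsc : (cm Ds).PosSemidef := by
    have hH : (cm Ds).IsHermitian := by
      rw [Matrix.IsHermitian, cm_conjTranspose, hDssym]
    refine Matrix.PosSemidef.of_dotProduct_mulVec_nonneg hH fun u => ?_
    change 0 ≤ quad _ u
    rw [Complex.le_def]
    refine ⟨?_, by simpa using (quad_im_of_herm hH u).symm⟩
    have hr := hDs.dotProduct_mulVec_nonneg (fun i => (u i).re)
    have hi := hDs.dotProduct_mulVec_nonneg (fun i => (u i).im)
    have : (quad (cm Ds) u).re = star (fun i => (u i).re) ⬝ᵥ (Ds *ᵥ fun i => (u i).re) +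
        star (fun i => (u i).im) ⬝ᵥ (Ds *ᵥ fun i => (u i).im) := by
      simp [quad, dotProduct, mulVec, Finset.sum_add_distrib]
    rw [this]
    exact add_nonneg hr hi
  have e : cm ((D - C * A⁻¹ * B) * (Ds - Cs * As⁻¹ * Bs)) =
      (cm D + cm (Er A B C)) * (cm Ds + cm (Er As Bs Cs)) := by
    rw [cm_mul, ← cm_add, ← cm_add, Er, Er, sub_eq_add_neg, sub_eq_add_neg]
  have hherm : (cm D + cm (Er A B C)).IsHermitian := by
    refine Matrix.IsHermitian.add ?_ hNI.E_psd.1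
    rw [Matrix.IsHermitian, cm_conjTranspose, hDsym.eq]
  rw [hDsD, hDDs]
  refine ⟨by simp, by simp, ?_, ?_⟩
  · intro μ hμ
    rw [eigs] at hμ
    change μ ∈ spectrum ℂ (cm _) at hμ
    rw [e] at hμ
    exact herm_psd_real hherm (hDsc.add hSNI.isNI.E_psd) hμ
  · have key := loop_iff hNI hSNI hmin hmins hDsc h1 h2
    have e2 : cm (Matrix.fromBlocks (A + B * (1 - 0 : Matrix (Fin m) (Fin m) ℝ)⁻¹ * Ds * C) (B * (1 - 0 : Matrix (Fin m) (Fin m) ℝ)⁻¹ * Cs)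
        (Bs * (1 - 0 : Matrix (Fin m) (Fin m) ℝ)⁻¹ * C) (As + Bs * (1 - 0 : Matrix (Fin m) (Fin m) ℝ)⁻¹ * D * Cs)) =
        cl (cm A) (cm B) (cm C) (cm D) (cm As) (cm Bs) (cm Cs) (cm Ds) := by
      rw [cm, Matrix.fromBlocks_map, cl]
      simp only [sub_zero, inv_one, Matrix.mul_one]
      change Matrix.fromBlocks (cm _) (cm _) (cm _) (cm _) = _
      simp only [cm_add, cm_mul]
    rw [← e, ← e2] at key
    exact key
end

section
/- Let (A,B,C,0) be a minimal realization of a strictly proper m×m transfer function R(s) = C(sI − A)⁻¹B that is negative imaginary in the extended sense allowing a simple pole at the origin. Let (A_s,B_s,C_s,D_s) be a minimal realization of an m×m transfer function R_s that is strictly negative imaginary and satisfies R_s(s) + R_s(s)ᴴ ≺ 0 for every s ∈ ℂ with Re(s) ≥ 0 (in particular R_s(0) is real symmetric negative definite). If the matrix A + B·R_s(0)·C is nonsingular, then the closed-loop state matrix of the positive feedback interconnection, Ā = [[A + BD_sC, BC_s], [B_sC, A_s]], is Hurwitz. -/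
open Matrix Filter Topology ComplexOrder

lemma ni_local_bound (g : ℂ → ℂ) (F : Set ℝ) (hF : F.Finite)
    (ω : ℝ) (hp : ∀ᶠ s in 𝓝[≠] (Complex.I * ω), DifferentiableAt ℂ g s)
    (r : ℝ) (hr0 : 0 ≤ r)
    (hr : Tendsto (fun s => (s - Complex.I * ω) * g s) (𝓝[≠] (Complex.I * ω)) (𝓝 (r : ℂ)))
    (hfr : ∀ ω : ℝ, ω ∉ F → 0 ≤ (g (Complex.I * ω)).re) (c : ℝ) (hc : c < 0) :
    ∀ᶠ s in 𝓝 (Complex.I * ω), 0 < s.re → c < (g s).re := by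
  set ζ : ℂ := Complex.I * ω with hζ
  set p : ℂ → ℂ := Function.update (fun s => (s - ζ) * g s) ζ r with hpdef
  have hpc : ContinuousAt p ζ := continuousAt_update_same.2 hr
  have hpa : AnalyticAt ℂ p ζ := by
    apply Complex.analyticAt_of_differentiable_on_punctured_nhds_of_continuousAt _ hpc
    filter_upwards [hp, self_mem_nhdsWithin] with s hs hne
    have : DifferentiableAt ℂ (fun s => (s - ζ) * g s) s := by fun_prop
    refine this.congr_of_eventuallyEq ?_
    filter_upwards [isOpen_ne.mem_nhds hne] with t ht
    simp [hpdef, Function.update_of_ne ht]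
  have hhc : ContinuousAt (dslope p ζ) ζ := continuousAt_dslope_same.2 hpa.differentiableAt
  have hval : ∀ s, s ≠ ζ → dslope p ζ s = g s - r / (s - ζ) := by
    intro s hs
    have : s - ζ ≠ 0 := sub_ne_zero.2 hs
    rw [dslope_of_ne _ hs, slope_def_field]
    simp only [hpdef, Function.update_of_ne hs, Function.update_self]
    field_simp
  have h0 : 0 ≤ (dslope p ζ ζ).re := by
    have ht : Tendsto (fun t : ℝ => (dslope p ζ (Complex.I * t)).re) (𝓝[≠] ω)
        (𝓝 (dslope p ζ ζ).re) := by
      refine (Complex.continuous_re.tendsto _).comp ?_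
      refine hhc.tendsto.comp ?_
      have : Continuous (fun t : ℝ => Complex.I * (t : ℂ)) := by fun_prop
      exact (this.tendsto ω).mono_left nhdsWithin_le_nhds
    refine ge_of_tendsto ht ?_
    have hFe : ∀ᶠ t in 𝓝[≠] ω, t ∉ F := by
      have : (F \ {ω})ᶜ ∈ 𝓝 ω := (hF.subset Set.sdiff_subset).isClosed.isOpen_compl.mem_nhds (by simp)
      filter_upwards [mem_nhdsWithin_of_mem_nhds this, self_mem_nhdsWithin] with t ht hne hF'
      exact ht ⟨hF', hne⟩
    filter_upwards [hFe, self_mem_nhdsWithin] with t ht hne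
    have hne' : Complex.I * (t : ℂ) ≠ ζ := by
      intro h
      apply hne
      have := mul_left_cancel₀ Complex.I_ne_zero h
      exact_mod_cast this
    rw [hval _ hne']
    have : ((r : ℂ) / (Complex.I * (t : ℂ) - ζ)).re = 0 := by
      rw [hζ, ← mul_sub, Complex.div_re]
      simp
    rw [Complex.sub_re, this, sub_zero]
    exact hfr t ht
  have h1 : ∀ᶠ s in 𝓝 ζ, c < (dslope p ζ s).re :=
    ((Complex.continuous_re.tendsto _).comp hhc.tendsto).eventually (lt_mem_nhds (lt_of_lt_of_le hc h0))
  filter_upwards [h1] with s hs hre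
  have hne : s ≠ ζ := by
    rintro rfl
    simp [hζ] at hre
  rw [hval s hne, Complex.sub_re] at hs
  have : 0 ≤ ((r : ℂ) / (s - ζ)).re := by
    rw [Complex.div_re]
    have h2 : (s - ζ).re = s.re := by simp [hζ]
    rw [h2]
    simp only [Complex.ofReal_re, Complex.ofReal_im, zero_mul, zero_div, add_zero]
    exact div_nonneg (mul_nonneg hr0 hre.le) (Complex.normSq_nonneg _)
  linarith

lemma ni_pr_of_boundary (g : ℂ → ℂ) (F : Set ℝ) (hF : F.Finite)
    (hd : ∀ s : ℂ, 0 < s.re → DifferentiableAt ℂ g s)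
    (hp : ∀ ω : ℝ, ∀ᶠ s in 𝓝[≠] (Complex.I * ω), DifferentiableAt ℂ g s)
    (hr : ∀ ω : ℝ, ∃ r : ℝ, 0 ≤ r ∧
      Tendsto (fun s => (s - Complex.I * ω) * g s) (𝓝[≠] (Complex.I * ω)) (𝓝 (r : ℂ)))
    (hfr : ∀ ω : ℝ, ω ∉ F → 0 ≤ (g (Complex.I * ω)).re)
    (L : ℂ) (hinf : Tendsto g (Bornology.cobounded ℂ) (𝓝 L)) :
    ∀ s : ℂ, 0 < s.re → 0 ≤ (g s).re := by
  intro s0 hs0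
  by_contra hneg
  push Not at hneg
  set c := (g s0).re with hcdef
  set U : Set ℂ := {s | 0 < s.re} with hU
  set S : Set ℂ := {s | 0 < s.re ∧ (g s).re ≤ c} with hS
  have hUo : IsOpen U := isOpen_lt continuous_const Complex.continuous_re
  have hL : 0 ≤ L.re := by
    have h1 : Tendsto (fun t : ℝ => Complex.I * (t : ℂ)) atTop (Bornology.cobounded ℂ) := by
      rw [← tendsto_norm_atTop_iff_cobounded]
      simpa using tendsto_abs_atTop_atTop
    refine ge_of_tendsto ((Complex.continuous_re.tendsto _).comp (hinf.comp h1)) ?_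
    have : ∀ᶠ t : ℝ in atTop, t ∉ F := by
      obtain ⟨b, hb⟩ := hF.bddAbove
      filter_upwards [eventually_gt_atTop b] with t ht hF'
      exact absurd (hb hF') (not_le.2 ht)
    filter_upwards [this] with t ht
    exact hfr t ht
  have hSb : Bornology.IsBounded S := by
    rw [← Bornology.isCobounded_compl_iff]
    have : ∀ᶠ s in Bornology.cobounded ℂ, c < (g s).re :=
      ((Complex.continuous_re.tendsto _).comp hinf).eventually (lt_mem_nhds (lt_of_lt_of_le hneg hL))
    refine Filter.mem_of_superset this ?_
    intro s hs hs'
    exact absurd hs'.2 (not_le.2 hs)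
  have hSc : IsClosed S := by
    rw [← closure_subset_iff_isClosed]
    intro ζ hζ
    rw [mem_closure_iff_frequently] at hζ
    have h0 : 0 ≤ ζ.re := by
      by_contra h
      push Not at h
      have : ∀ᶠ s : ℂ in 𝓝 ζ, s.re < 0 := Complex.continuous_re.continuousAt.eventually (gt_mem_nhds h)
      obtain ⟨s, hs, hs'⟩ := (hζ.and_eventually this).exists
      linarith [hs.1]
    rcases h0.lt_or_eq with h0 | h0
    · refine ⟨h0, ?_⟩
      by_contra h
      push Not at h
      have : ∀ᶠ s : ℂ in 𝓝 ζ, c < (g s).re :=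
        (Complex.continuous_re.continuousAt.comp (hd ζ h0).continuousAt).eventually (lt_mem_nhds h)
      obtain ⟨s, hs, hs'⟩ := (hζ.and_eventually this).exists
      linarith [hs.2]
    · exfalso
      have hζe : ζ = Complex.I * (ζ.im : ℂ) := by
        apply Complex.ext <;> simp [← h0]
      obtain ⟨r, hr0, hr⟩ := hr ζ.im
      have := ni_local_bound g F hF ζ.im (hp _) r hr0 hr hfr c hneg
      rw [← hζe] at this
      obtain ⟨s, hs, hs'⟩ := (hζ.and_eventually this).exists
      linarith [hs.2, hs' hs.1]
  have hSk : IsCompact S := Metric.isCompact_of_isClosed_isBounded hSc hSb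
  have hcont : ContinuousOn (fun s => (g s).re) S := fun s hs =>
    (Complex.continuous_re.continuousAt.comp (hd s hs.1).continuousAt).continuousWithinAt
  obtain ⟨s1, hs1, hmin⟩ := hSk.exists_isMinOn ⟨s0, hs0, le_rfl⟩ hcont
  have hmin' : ∀ s ∈ U, (g s1).re ≤ (g s).re := by
    intro s hs
    by_cases h : (g s).re ≤ c
    · exact hmin ⟨hs, h⟩
    · push Not at h
      exact hs1.2.trans h.le
  have hmax : IsMaxOn (norm ∘ fun s => Complex.exp (-g s)) U s1 := by
    intro s hs
    simp only [Set.mem_ofPred_eq, Function.comp, Complex.norm_exp, Complex.neg_re]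
    exact Real.exp_le_exp.2 (neg_le_neg (hmin' s hs))
  have hconv : Convex ℝ U := convex_halfSpace_re_gt 0
  have hdiff : DifferentiableOn ℂ (fun s => Complex.exp (-g s)) U := fun s hs =>
    ((hd s hs).neg.cexp).differentiableWithinAt
  have heq := Complex.norm_eqOn_of_isPreconnected_of_isMaxOn hconv.isPreconnected hUo hdiff hs1.1 hmax
  have hUS : U ⊆ S := by
    intro s hs
    refine ⟨hs, ?_⟩
    have := heq hs
    simp only [Function.comp, Function.const, Complex.norm_exp, Complex.neg_re, Real.exp_eq_exp,
      neg_inj] at this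
    rw [this]
    exact hs1.2
  obtain ⟨b, hb⟩ := (hSb.subset hUS).exists_norm_le
  have h1 : ((|b| + 1 : ℝ) : ℂ) ∈ U := by
    simp only [hU, Set.mem_ofPred_eq, Complex.ofReal_re]; positivity
  have h2 := hb _ h1
  rw [Complex.norm_real, Real.norm_eq_abs, abs_of_pos (by positivity)] at h2
  linarith [le_abs_self b]
section
open scoped Matrix.Norms.Operator

lemma ni_rz_eq {n : ℕ} (M : Matrix (Fin n) (Fin n) ℂ) (s : ℂ) :
    (s • (1 : Matrix (Fin n) (Fin n) ℂ) - M)⁻¹ = resolvent M s := by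
  rw [resolvent, Matrix.nonsing_inv_eq_ringInverse, Algebra.algebraMap_eq_smul_one]

/-- the linear functional `X ↦ p ⬝ X q` -/
noncomputable def ni_fun {n : ℕ} (p q : Fin n → ℂ) : Matrix (Fin n) (Fin n) ℂ →ₗ[ℂ] ℂ where
  toFun X := p ⬝ᵥ (X *ᵥ q)
  map_add' X Y := by simp [Matrix.add_mulVec, dotProduct_add]
  map_smul' c X := by simp [Matrix.smul_mulVec, dotProduct_smul]

lemma ni_rz_diff {n : ℕ} (M : Matrix (Fin n) (Fin n) ℂ) (p q : Fin n → ℂ) (s : ℂ)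
    (hs : s ∉ spectrum ℂ M) :
    DifferentiableAt ℂ
      (fun s : ℂ => p ⬝ᵥ ((s • (1 : Matrix (Fin n) (Fin n) ℂ) - M)⁻¹ *ᵥ q)) s := by
  have h1 : DifferentiableAt ℂ (resolvent M) s :=
    (spectrum.hasDerivAt_resolvent_const_left (spectrum.notMem_iff.1 hs)).differentiableAt
  have h2 := ((LinearMap.toContinuousLinearMap (ni_fun p q)).differentiableAt).comp s h1
  refine h2.congr_of_eventuallyEq (Eventually.of_forall fun t => ?_)
  simp [ni_rz_eq, ni_fun]

lemma ni_rz_inf {n : ℕ} (M : Matrix (Fin n) (Fin n) ℂ) (p q : Fin n → ℂ) :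
    Tendsto (fun s : ℂ => p ⬝ᵥ ((s • (1 : Matrix (Fin n) (Fin n) ℂ) - M)⁻¹ *ᵥ q))
      (Bornology.cobounded ℂ) (𝓝 0) := by
  have h1 := spectrum.resolvent_tendsto_cobounded (𝕜 := ℂ) M
  have h2 := ((LinearMap.toContinuousLinearMap (ni_fun p q)).continuous.tendsto 0).comp h1
  rw [map_zero] at h2
  refine h2.congr fun t => ?_
  simp [ni_rz_eq, ni_fun]

end

lemma ni_mem_spec {k : Type*} [Fintype k] [DecidableEq k] (M : Matrix k k ℂ) (s : ℂ) :
    s ∈ spectrum ℂ M ↔ ∃ x : k → ℂ, x ≠ 0 ∧ M *ᵥ x = s • x := by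
  rw [spectrum.mem_iff, Matrix.isUnit_iff_isUnit_det, isUnit_iff_ne_zero, not_not,
    ← Matrix.exists_mulVec_eq_zero_iff, Algebra.algebraMap_eq_smul_one]
  refine exists_congr fun x => and_congr_right fun _ => ?_
  rw [Matrix.sub_mulVec, Matrix.smul_mulVec, Matrix.one_mulVec, sub_eq_zero, eq_comm]

lemma ni_unit {k : Type*} [Fintype k] [DecidableEq k] (M : Matrix k k ℂ) (s : ℂ)
    (hs : s ∉ spectrum ℂ M) : IsUnit (s • (1 : Matrix k k ℂ) - M).det := by
  rw [spectrum.notMem_iff, Matrix.isUnit_iff_isUnit_det, Algebra.algebraMap_eq_smul_one] at hs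
  exact hs

lemma ni_ev_notMem {n : ℕ} (M : Matrix (Fin n) (Fin n) ℂ) (ζ : ℂ) :
    ∀ᶠ s in 𝓝[≠] ζ, s ∉ spectrum ℂ M := by
  have hF := Matrix.finite_spectrum M
  have : (spectrum ℂ M \ {ζ})ᶜ ∈ 𝓝 ζ :=
    (hF.subset Set.sdiff_subset).isClosed.isOpen_compl.mem_nhds (by simp)
  filter_upwards [mem_nhdsWithin_of_mem_nhds this, self_mem_nhdsWithin] with t ht hne hF'
  exact ht ⟨hF', hne⟩

/-- quadratic form of the transfer function -/
noncomputable def ni_q {n m : ℕ} (A : Matrix (Fin n) (Fin n) ℝ) (B : Matrix (Fin n) (Fin m) ℝ)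
    (C : Matrix (Fin m) (Fin n) ℝ) (D : Matrix (Fin m) (Fin m) ℝ) (u : Fin m → ℂ) (s : ℂ) : ℂ :=
  star u ⬝ᵥ (tf A B C D s *ᵥ u)

lemma ni_tf_mulVec {n m : ℕ} (A : Matrix (Fin n) (Fin n) ℝ) (B : Matrix (Fin n) (Fin m) ℝ)
    (C : Matrix (Fin m) (Fin n) ℝ) (D : Matrix (Fin m) (Fin m) ℝ) (u : Fin m → ℂ) (s : ℂ) :
    tf A B C D s *ᵥ u = C.map Complex.ofReal *ᵥ
      ((s • (1 : Matrix (Fin n) (Fin n) ℂ) - A.map Complex.ofReal)⁻¹ *ᵥ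
        (B.map Complex.ofReal *ᵥ u)) + D.map Complex.ofReal *ᵥ u := by
  simp [tf, Matrix.add_mulVec, Matrix.mulVec_mulVec, Matrix.mul_assoc]

lemma ni_map_real {k l : Type*} (A : Matrix k l ℝ) :
    (A.map Complex.ofReal)ᴴᵀ = A.map Complex.ofReal := by
  ext i j; simp

lemma ni_tf_conj {n m : ℕ} (A : Matrix (Fin n) (Fin n) ℝ) (B : Matrix (Fin n) (Fin m) ℝ)
    (C : Matrix (Fin m) (Fin n) ℝ) (D : Matrix (Fin m) (Fin m) ℝ) (s : ℂ) :
    tf A B C D (star s) = (tf A B C D s)ᴴᵀ := by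
  have h : ((s • (1 : Matrix (Fin n) (Fin n) ℂ) - A.map Complex.ofReal)⁻¹)ᴴᵀ
      = (star s • (1 : Matrix (Fin n) (Fin n) ℂ) - A.map Complex.ofReal)⁻¹ := by
    rw [Matrix.conjTranspose_nonsing_inv, Matrix.transpose_nonsing_inv, Matrix.conjTranspose_sub,
      Matrix.transpose_sub, ni_map_real]
    simp
  rw [tf, tf, Matrix.conjTranspose_add, Matrix.transpose_add, ni_map_real,
    Matrix.conjTranspose_mul, Matrix.transpose_mul, Matrix.conjTranspose_mul, Matrix.transpose_mul,
    ni_map_real, ni_map_real, h]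

lemma ni_q_conj {n m : ℕ} (A : Matrix (Fin n) (Fin n) ℝ) (B : Matrix (Fin n) (Fin m) ℝ)
    (C : Matrix (Fin m) (Fin n) ℝ) (D : Matrix (Fin m) (Fin m) ℝ) (u : Fin m → ℂ) (s : ℂ) :
    ni_q A B C D u (star s) = star (ni_q A B C D (star u) s) := by
  rw [ni_q, ni_q, ni_tf_conj]
  simp only [dotProduct, mulVec, star_sum, star_mul', Matrix.transpose_apply,
    Matrix.conjTranspose_apply, Pi.star_apply, star_star]

lemma ni_herm_form {m : ℕ} (T : Matrix (Fin m) (Fin m) ℂ) (u : Fin m → ℂ) :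
    star u ⬝ᵥ (Tᴴ *ᵥ u) = star (star u ⬝ᵥ (T *ᵥ u)) := by
  rw [← Matrix.star_dotProduct, Matrix.star_mulVec, Matrix.dotProduct_mulVec]

lemma ni_form_im {m : ℕ} (T : Matrix (Fin m) (Fin m) ℂ) (u : Fin m → ℂ) :
    star u ⬝ᵥ ((Complex.I • (T - Tᴴ)) *ᵥ u) = ((-2 * (star u ⬝ᵥ (T *ᵥ u)).im : ℝ) : ℂ) := by
  rw [Matrix.smul_mulVec, dotProduct_smul, Matrix.sub_mulVec, dotProduct_sub, ni_herm_form]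
  apply Complex.ext <;> simp
  ring

lemma ni_inv_mul {n : ℕ} (M : Matrix (Fin n) (Fin n) ℂ) (s : ℂ) (hs : s ∉ spectrum ℂ M)
    (x : Fin n → ℂ) :
    (s • (1 : Matrix (Fin n) (Fin n) ℂ) - M)⁻¹ *ᵥ (s • x - M *ᵥ x) = x := by
  have h : s • x - M *ᵥ x = (s • (1 : Matrix (Fin n) (Fin n) ℂ) - M) *ᵥ x := by
    simp [Matrix.sub_mulVec, Matrix.smul_mulVec]
  rw [h, Matrix.mulVec_mulVec, Matrix.nonsing_inv_mul _ (ni_unit M s hs), Matrix.one_mulVec]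

lemma ni_mul_inv {n : ℕ} (M : Matrix (Fin n) (Fin n) ℂ) (s : ℂ) (hs : s ∉ spectrum ℂ M)
    (x : Fin n → ℂ) :
    s • ((s • (1 : Matrix (Fin n) (Fin n) ℂ) - M)⁻¹ *ᵥ x) =
      x + M *ᵥ ((s • (1 : Matrix (Fin n) (Fin n) ℂ) - M)⁻¹ *ᵥ x) := by
  have h : (s • (1 : Matrix (Fin n) (Fin n) ℂ) - M) *ᵥ
      ((s • (1 : Matrix (Fin n) (Fin n) ℂ) - M)⁻¹ *ᵥ x) = x := by
    rw [Matrix.mulVec_mulVec, Matrix.mul_nonsing_inv _ (ni_unit M s hs), Matrix.one_mulVec]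
  rw [Matrix.sub_mulVec, Matrix.smul_mulVec, Matrix.one_mulVec] at h
  rw [← sub_eq_iff_eq_add]
  exact h

/-- rank `n` gives a right inverse after complexification -/
lemma ni_right_inv {n : ℕ} {k : Type*} [Fintype k] [DecidableEq k] (M : Matrix (Fin n) k ℝ)
    (h : M.rank = n) : ∃ N : Matrix k (Fin n) ℂ, M.map Complex.ofReal * N = 1 := by
  have hs : Function.Surjective M.mulVec := by
    have : LinearMap.range M.mulVecLin = ⊤ := by
      apply Submodule.eq_top_of_finrank_eq
      rw [← Matrix.rank, h]; simp
    exact LinearMap.range_eq_top.1 this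
  obtain ⟨N, hN⟩ := Matrix.mulVec_surjective_iff_exists_right_inverse.1 hs
  refine ⟨N.map Complex.ofReal, ?_⟩
  have := congrArg (fun X => X.map Complex.ofRealHom) hN
  rw [Matrix.map_mul, Matrix.map_one _ (map_zero _) (map_one _)] at this
  exact this

lemma ni_map_mul {k l p : Type*} [Fintype l] (A : Matrix k l ℝ) (B : Matrix l p ℝ) :
    (A * B).map Complex.ofReal = A.map Complex.ofReal * B.map Complex.ofReal :=
  Matrix.map_mul (f := Complex.ofRealHom)

lemma ni_map_pow {n : ℕ} (A : Matrix (Fin n) (Fin n) ℝ) (k : ℕ) :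
    (A ^ k).map Complex.ofReal = (A.map Complex.ofReal) ^ k :=
  Matrix.map_pow A Complex.ofRealHom k

lemma ni_obs {n m : ℕ} (A : Matrix (Fin n) (Fin n) ℝ)
    (C : Matrix (Fin m) (Fin n) ℝ)
    (h : (Matrix.of fun (p : Fin n × Fin m) (i : Fin n) => (C * A ^ (p.1 : ℕ)) p.2 i).rank = n)
    (x : Fin n → ℂ) (s : ℂ) (hx : A.map Complex.ofReal *ᵥ x = s • x)
    (hC : C.map Complex.ofReal *ᵥ x = 0) : x = 0 := by
  rw [← Matrix.rank_transpose] at h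
  obtain ⟨N, hN⟩ := ni_right_inv _ h
  have hN' := congrArg Matrix.transpose hN
  rw [Matrix.transpose_mul, Matrix.transpose_one] at hN'
  rw [← Matrix.one_mulVec x, ← hN', ← Matrix.mulVec_mulVec]
  refine (congrArg _ ?_).trans (Matrix.mulVec_zero _)
  have hpow : ∀ k : ℕ, (A.map Complex.ofReal) ^ k *ᵥ x = s ^ k • x := by
    intro k
    induction k with
    | zero => simp
    | succ k ih => rw [pow_succ', ← Matrix.mulVec_mulVec, ih, Matrix.mulVec_smul, hx, smul_smul, pow_succ]
  ext ⟨k, i⟩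
  have h1 : (C * A ^ (k : ℕ)).map Complex.ofReal *ᵥ x = 0 := by
    have : (C * A ^ (k : ℕ)).map Complex.ofReal
        = C.map Complex.ofReal * (A.map Complex.ofReal) ^ (k : ℕ) := by
      rw [ni_map_mul, ni_map_pow]
    rw [this, ← Matrix.mulVec_mulVec, hpow, Matrix.mulVec_smul, hC, smul_zero]
  exact congrFun h1 i

lemma ni_ctrl {n m : ℕ} (A : Matrix (Fin n) (Fin n) ℝ)
    (B : Matrix (Fin n) (Fin m) ℝ)
    (h : (Matrix.of fun (i : Fin n) (p : Fin n × Fin m) => (A ^ (p.1 : ℕ) * B) i p.2).rank = n)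
    (P : Submodule ℂ (Fin n → ℂ)) (hB : ∀ w, B.map Complex.ofReal *ᵥ w ∈ P)
    (hA : ∀ x ∈ P, A.map Complex.ofReal *ᵥ x ∈ P) (x : Fin n → ℂ) : x ∈ P := by
  obtain ⟨N, hN⟩ := ni_right_inv _ h
  rw [← Matrix.one_mulVec x, ← hN, ← Matrix.mulVec_mulVec]
  set y := N *ᵥ x
  have hpow : ∀ (k : ℕ) (w), (A.map Complex.ofReal) ^ k *ᵥ (B.map Complex.ofReal *ᵥ w) ∈ P := by
    intro k w
    induction k with
    | zero => simpa using hB w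
    | succ k ih => rw [pow_succ', ← Matrix.mulVec_mulVec]; exact hA _ ih
  have hmap : ∀ k : ℕ, (A ^ k * B).map Complex.ofReal
      = (A.map Complex.ofReal) ^ k * B.map Complex.ofReal := by
    intro k
    rw [ni_map_mul, ni_map_pow]
  have hsum : ((Matrix.of fun (i : Fin n) (p : Fin n × Fin m) =>
      (A ^ (p.1 : ℕ) * B) i p.2).map Complex.ofReal) *ᵥ y
      = ∑ k : Fin n, (A.map Complex.ofReal) ^ (k : ℕ) *ᵥ
        (B.map Complex.ofReal *ᵥ (fun j => y (k, j))) := by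
    ext i
    rw [Finset.sum_apply]
    simp only [Matrix.mulVec_mulVec, ← hmap]
    simp only [mulVec, dotProduct, Matrix.map_apply, Matrix.of_apply]
    rw [Fintype.sum_prod_type]
  rw [hsum]
  exact P.sum_mem fun k _ => hpow _ _
lemma ni_q_eq {n m : ℕ} (A : Matrix (Fin n) (Fin n) ℝ) (B : Matrix (Fin n) (Fin m) ℝ)
    (C : Matrix (Fin m) (Fin n) ℝ) (D : Matrix (Fin m) (Fin m) ℝ) (u : Fin m → ℂ) (s : ℂ) :
    ni_q A B C D u s = (star u ᵥ* C.map Complex.ofReal) ⬝ᵥ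
      ((s • (1 : Matrix (Fin n) (Fin n) ℂ) - A.map Complex.ofReal)⁻¹ *ᵥ
        (B.map Complex.ofReal *ᵥ u)) + star u ⬝ᵥ (D.map Complex.ofReal *ᵥ u) := by
  rw [ni_q, ni_tf_mulVec, dotProduct_add, Matrix.dotProduct_mulVec]

lemma ni_q_diff {n m : ℕ} (A : Matrix (Fin n) (Fin n) ℝ) (B : Matrix (Fin n) (Fin m) ℝ)
    (C : Matrix (Fin m) (Fin n) ℝ) (D : Matrix (Fin m) (Fin m) ℝ) (u : Fin m → ℂ) (s : ℂ)
    (hs : s ∉ eigs A) : DifferentiableAt ℂ (ni_q A B C D u) s := by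
  have h := (ni_rz_diff (A.map Complex.ofReal) (star u ᵥ* C.map Complex.ofReal)
    (B.map Complex.ofReal *ᵥ u) s hs).add_const (star u ⬝ᵥ (D.map Complex.ofReal *ᵥ u))
  refine h.congr_of_eventuallyEq (Eventually.of_forall fun t => ?_)
  exact ni_q_eq A B C D u t

lemma ni_q_tend {n m : ℕ} (A : Matrix (Fin n) (Fin n) ℝ) (B : Matrix (Fin n) (Fin m) ℝ)
    (C : Matrix (Fin m) (Fin n) ℝ) (D : Matrix (Fin m) (Fin m) ℝ) (u : Fin m → ℂ) (f : ℂ → ℂ)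
    (l : Filter ℂ) (K : Matrix (Fin m) (Fin m) ℂ)
    (h : Tendsto (fun s => f s • tf A B C D s) l (𝓝 K)) :
    Tendsto (fun s => f s * ni_q A B C D u s) l (𝓝 (star u ⬝ᵥ (K *ᵥ u))) := by
  have hc : Continuous (fun X : Matrix (Fin m) (Fin m) ℂ => star u ⬝ᵥ (X *ᵥ u)) := by
    fun_prop
  refine ((hc.tendsto K).comp h).congr fun s => ?_
  simp [ni_q, Matrix.smul_mulVec, dotProduct_smul]

lemma ni_fr_im {n m : ℕ} (A : Matrix (Fin n) (Fin n) ℝ) (B : Matrix (Fin n) (Fin m) ℝ)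
    (C : Matrix (Fin m) (Fin n) ℝ) (D : Matrix (Fin m) (Fin m) ℝ)
    (hNIfr : ∀ ω : ℝ, 0 < ω → (Complex.I * ω) ∉ eigs A →
      (Complex.I • (tf A B C D (Complex.I * ω) - (tf A B C D (Complex.I * ω))ᴴ)).PosSemidef)
    (u : Fin m → ℂ) (ω : ℝ) (hω : 0 < ω) (h : (Complex.I * ω) ∉ eigs A) :
    (ni_q A B C D u (Complex.I * ω)).im ≤ 0 := by
  have h1 := (hNIfr ω hω h).dotProduct_mulVec_nonneg u
  rw [ni_form_im, Complex.zero_le_real] at h1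
  rw [ni_q]
  linarith

lemma ni_eigs_conj {k : Type*} [Fintype k] [DecidableEq k] (A : Matrix k k ℝ) (s : ℂ)
    (h : s ∈ eigs A) : star s ∈ eigs A := by
  rw [eigs, ni_mem_spec] at *
  obtain ⟨x, hx, he⟩ := h
  refine ⟨star x, by simpa using hx, ?_⟩
  have h1 := congrArg star he
  rw [star_smul] at h1
  rw [← h1]
  ext i
  simp [mulVec, dotProduct]

lemma ni_R_pr {n m : ℕ}
    (A : Matrix (Fin n) (Fin n) ℝ) (B : Matrix (Fin n) (Fin m) ℝ)
    (C : Matrix (Fin m) (Fin n) ℝ)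
    (hstable : ∀ μ ∈ eigs A, μ.re ≤ 0)
    (hpole0 : (0 : ℂ) ∈ eigs A →
      ∃ K : Matrix (Fin m) (Fin m) ℂ,
        Tendsto (fun s : ℂ => s • tf A B C 0 s) (𝓝[≠] (0 : ℂ)) (𝓝 K) ∧ K.PosSemidef)
    (hNIfr : ∀ ω : ℝ, 0 < ω → (Complex.I * ω) ∉ eigs A →
      (Complex.I • (tf A B C 0 (Complex.I * ω) - (tf A B C 0 (Complex.I * ω))ᴴ)).PosSemidef)
    (hNIres : ∀ ω : ℝ, 0 < ω → (Complex.I * ω) ∈ eigs A →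
      ∃ K : Matrix (Fin m) (Fin m) ℂ,
        Tendsto (fun s : ℂ => (s - Complex.I * ω) • Complex.I • tf A B C 0 s)
          (𝓝[≠] (Complex.I * ω)) (𝓝 K) ∧ K.PosSemidef) (u : Fin m → ℂ) (s : ℂ)
    (hs : 0 < s.re) : 0 ≤ (s * ni_q A B C 0 u s).re := by
  have hstar : ∀ t : ℝ, star (Complex.I * (t : ℂ)) = Complex.I * ((-t : ℝ) : ℂ) := by
    intro t
    simp
  have hgc : ∀ (u : Fin m → ℂ) (s : ℂ), star s * ni_q A B C 0 u (star s)
      = star (s * ni_q A B C 0 (star u) s) := by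
    intro u s
    rw [ni_q_conj, star_mul']
  have hnonpole : ∀ (u : Fin m → ℂ) (ζ : ℂ), ζ ∉ eigs A →
      Tendsto (fun s => (s - ζ) * (s * ni_q A B C 0 u s)) (𝓝[≠] ζ) (𝓝 ((0 : ℝ) : ℂ)) := by
    intro u ζ hζ
    have h1 : ContinuousAt (fun s => (s - ζ) * (s * ni_q A B C 0 u s)) ζ := by
      have := (ni_q_diff A B C 0 u ζ hζ).continuousAt
      fun_prop
    have h2 := h1.tendsto
    simp only [sub_self, zero_mul] at h2
    simpa using h2.mono_left nhdsWithin_le_nhds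
  have hrespos : ∀ (u : Fin m → ℂ) (ω : ℝ), 0 < ω → ∃ r : ℝ, 0 ≤ r ∧
      Tendsto (fun s => (s - Complex.I * ω) * (s * ni_q A B C 0 u s)) (𝓝[≠] (Complex.I * ω))
        (𝓝 (r : ℂ)) := by
    intro u ω hω
    by_cases he : (Complex.I * ω) ∈ eigs A
    · obtain ⟨K, hK, hKp⟩ := hNIres ω hω he
      have h0 := hKp.dotProduct_mulVec_nonneg u
      obtain ⟨k, hk0, hk⟩ : ∃ k : ℝ, 0 ≤ k ∧ star u ⬝ᵥ (K *ᵥ u) = (k : ℂ) := by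
        rw [Complex.nonneg_iff] at h0
        refine ⟨(star u ⬝ᵥ (K *ᵥ u)).re, h0.1, ?_⟩
        apply Complex.ext
        · simp
        · simp [← h0.2]
      simp only [smul_smul] at hK
      have h1 := ni_q_tend A B C 0 u _ _ K hK
      rw [hk] at h1
      refine ⟨ω * k, by positivity, ?_⟩
      have h2 : Tendsto (fun s : ℂ => s * (-Complex.I)) (𝓝[≠] (Complex.I * (ω : ℂ)))
          (𝓝 ((Complex.I * (ω : ℂ)) * (-Complex.I))) := by
        have : Continuous (fun s : ℂ => s * (-Complex.I)) := by fun_prop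
        exact (this.tendsto _).mono_left nhdsWithin_le_nhds
      have h3 := h2.mul h1
      have h4 : (Complex.I * (ω : ℂ)) * (-Complex.I) * (k : ℂ) = ((ω * k : ℝ) : ℂ) := by
        push_cast
        linear_combination (-(ω : ℂ) * k) * Complex.I_mul_I
      rw [h4] at h3
      refine h3.congr fun s => ?_
      linear_combination (-s * (s - Complex.I * ω) * ni_q A B C 0 u s) * Complex.I_mul_I
    · exact ⟨0, le_rfl, hnonpole u _ he⟩
  have hpos : ∀ (u : Fin m → ℂ) (ω : ℝ), 0 < ω → (Complex.I * ω) ∉ eigs A →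
      0 ≤ (Complex.I * ω * ni_q A B C 0 u (Complex.I * ω)).re := by
    intro u ω hω h
    have h1 := ni_fr_im A B C 0 hNIfr u ω hω h
    have : (Complex.I * ω * ni_q A B C 0 u (Complex.I * ω)).re
        = -(ω * (ni_q A B C 0 u (Complex.I * ω)).im) := by
      simp
    rw [this]
    nlinarith
  refine ni_pr_of_boundary (fun s => s * ni_q A B C 0 u s)
    (((fun t : ℝ => Complex.I * (t : ℂ)) ⁻¹' (eigs A)) ∪ {0}) ?_ ?_ ?_ ?_ ?_
    (star u ⬝ᵥ (C.map Complex.ofReal *ᵥ (B.map Complex.ofReal *ᵥ u))) ?_ s hs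
  · refine Set.Finite.union ?_ (Set.finite_singleton _)
    refine Set.Finite.preimage ?_ (Matrix.finite_spectrum _)
    intro a _ b _ hab
    have := mul_left_cancel₀ Complex.I_ne_zero hab
    exact_mod_cast this
  · intro s hs
    have : s ∉ eigs A := fun h => absurd (hstable s h) (not_le.2 hs)
    exact differentiableAt_id.mul (ni_q_diff A B C 0 u s this)
  · intro ω
    filter_upwards [ni_ev_notMem (A.map Complex.ofReal) (Complex.I * ω)] with s hs
    exact differentiableAt_id.mul (ni_q_diff A B C 0 u s hs)
  · intro ω
    rcases lt_trichotomy ω 0 with hω | hω | hω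
    · obtain ⟨r, hr0, hr⟩ := hrespos (star u) (-ω) (by linarith)
      refine ⟨r, hr0, ?_⟩
      have h1 : Tendsto (fun s : ℂ => star s) (𝓝[≠] (Complex.I * (ω : ℂ)))
          (𝓝[≠] (Complex.I * ((-ω : ℝ) : ℂ))) := by
        rw [← hstar]
        refine tendsto_nhdsWithin_iff.2 ⟨?_, ?_⟩
        · exact (continuous_star.tendsto _).mono_left nhdsWithin_le_nhds
        · filter_upwards [self_mem_nhdsWithin] with s hs h
          exact hs (star_injective h)
      have h2 := (continuous_star.tendsto _).comp (hr.comp h1)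
      have h3 : star (r : ℂ) = (r : ℂ) := Complex.conj_ofReal r
      rw [h3] at h2
      refine h2.congr fun s => ?_
      simp only [Function.comp]
      rw [star_mul', ← hgc, star_star, star_sub, star_star, hstar, neg_neg]
    · subst hω
      refine ⟨0, le_rfl, ?_⟩
      by_cases he : (0 : ℂ) ∈ eigs A
      · obtain ⟨K, hK, -⟩ := hpole0 he
        have h1 := ni_q_tend A B C 0 u (fun s => s) _ K hK
        have h2 : Tendsto (fun s : ℂ => s) (𝓝[≠] (0 : ℂ)) (𝓝 0) := nhdsWithin_le_nhds
        have h3 := h2.mul h1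
        simpa using h3
      · have := hnonpole u 0 he
        simpa using this
    · exact hrespos u ω hω
  · intro ω hω
    simp only [Set.mem_union, Set.mem_preimage, Set.mem_singleton_iff, not_or] at hω
    rcases lt_or_gt_of_ne hω.2 with h | h
    · have h1 : Complex.I * ((-ω : ℝ) : ℂ) ∉ eigs A := by
        intro h'
        apply hω.1
        have := ni_eigs_conj A _ h'
        rwa [hstar, neg_neg] at this
      have h2 := hpos (star u) (-ω) (by linarith) h1
      have h3 := hgc u (Complex.I * ((-ω : ℝ) : ℂ))
      rw [hstar, neg_neg] at h3
      rw [h3]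
      simpa using h2
    · exact hpos u ω h hω.1
  · have h1 := ni_rz_inf (A.map Complex.ofReal)
      (star u ᵥ* C.map Complex.ofReal ᵥ* A.map Complex.ofReal) (B.map Complex.ofReal *ᵥ u)
    have h2 := h1.const_add (star u ⬝ᵥ (C.map Complex.ofReal *ᵥ (B.map Complex.ofReal *ᵥ u)))
    rw [add_zero] at h2
    refine h2.congr' ?_
    have hfin : ∀ᶠ s in Bornology.cobounded ℂ, s ∉ eigs A := by
      have hb : Bornology.IsBounded (eigs A) :=
        (Matrix.finite_spectrum (A.map Complex.ofReal)).isBounded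
      exact hb
    filter_upwards [hfin] with s hs
    have h3 := ni_mul_inv (A.map Complex.ofReal) s hs (B.map Complex.ofReal *ᵥ u)
    rw [ni_q_eq, ← smul_eq_mul s, smul_add, ← dotProduct_smul, h3, dotProduct_add]
    simp [Matrix.dotProduct_mulVec, Matrix.mul_assoc]

lemma ni_pole {n m : ℕ}
    (A : Matrix (Fin n) (Fin n) ℝ) (B : Matrix (Fin n) (Fin m) ℝ)
    (C : Matrix (Fin m) (Fin n) ℝ)
    (hctrl : (Matrix.of fun (i : Fin n) (p : Fin n × Fin m) =>
      (A ^ (p.1 : ℕ) * B) i p.2).rank = n)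
    (hNIfr : ∀ ω : ℝ, 0 < ω → (Complex.I * ω) ∉ eigs A →
      (Complex.I • (tf A B C 0 (Complex.I * ω) - (tf A B C 0 (Complex.I * ω))ᴴ)).PosSemidef)
    (hNIres : ∀ ω : ℝ, 0 < ω → (Complex.I * ω) ∈ eigs A →
      ∃ K : Matrix (Fin m) (Fin m) ℂ,
        Tendsto (fun s : ℂ => (s - Complex.I * ω) • Complex.I • tf A B C 0 s)
          (𝓝[≠] (Complex.I * ω)) (𝓝 K) ∧ K.PosSemidef) (u : Fin m → ℂ) (x : Fin n → ℂ)
    (ω : ℝ) (hω : 0 < ω)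
    (hx : (Complex.I * (ω : ℂ)) • x - A.map Complex.ofReal *ᵥ x = B.map Complex.ofReal *ᵥ u) :
    (star u ⬝ᵥ (C.map Complex.ofReal *ᵥ x)).im ≤ 0 := by
  set Ac := A.map Complex.ofReal with hAc
  set Bc := B.map Complex.ofReal with hBc
  set Cc := C.map Complex.ofReal with hCc
  set ζ : ℂ := Complex.I * (ω : ℂ) with hζ
  have htf : ∀ s, ∀ u, tf A B C 0 s *ᵥ u
      = Cc *ᵥ ((s • (1 : Matrix (Fin n) (Fin n) ℂ) - Ac)⁻¹ *ᵥ (Bc *ᵥ u)) := by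
    intro s u
    rw [ni_tf_mulVec]; simp [hAc, hBc, hCc]
  by_cases he : ζ ∈ eigs A
  swap
  · have h1 := ni_fr_im A B C 0 hNIfr u ω hω he
    rwa [ni_q, ← hζ, htf, ← hx, ni_inv_mul Ac ζ he] at h1
  obtain ⟨K, hK, hKp⟩ := hNIres ω hω he
  have hid : Tendsto (fun s : ℂ => s) (𝓝[≠] ζ) (𝓝 ζ) := nhdsWithin_le_nhds
  have hsub : Tendsto (fun s : ℂ => s - ζ) (𝓝[≠] ζ) (𝓝 0) := by
    simpa using hid.sub_const ζ
  have hKu : ∀ u, Tendsto (fun s : ℂ => (s - ζ) • Complex.I • (tf A B C 0 s *ᵥ u)) (𝓝[≠] ζ)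
      (𝓝 (K *ᵥ u)) := by
    intro u
    have hc : Continuous (fun X : Matrix (Fin m) (Fin m) ℂ => X *ᵥ u) := by fun_prop
    refine ((hc.tendsto K).comp hK).congr fun s => ?_
    simp [Matrix.smul_mulVec, hζ]
  let P : Submodule ℂ (Fin n → ℂ) :=
    { carrier := {x | ∃ w, Tendsto (fun s : ℂ => (s - ζ) • Complex.I •
        (Cc *ᵥ ((s • (1 : Matrix (Fin n) (Fin n) ℂ) - Ac)⁻¹ *ᵥ x))) (𝓝[≠] ζ) (𝓝 (K *ᵥ w))}
      add_mem' := by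
        rintro a b ⟨w, hw⟩ ⟨w', hw'⟩
        refine ⟨w + w', ?_⟩
        rw [Matrix.mulVec_add]
        refine (hw.add hw').congr fun s => ?_
        simp [Matrix.mulVec_add, smul_add]
      zero_mem' := ⟨0, by simp⟩
      smul_mem' := by
        rintro c a ⟨w, hw⟩
        refine ⟨c • w, ?_⟩
        rw [Matrix.mulVec_smul]
        refine (hw.const_smul c).congr fun s => ?_
        rw [Matrix.mulVec_smul, Matrix.mulVec_smul, smul_comm Complex.I c, smul_comm c] }
  have hxP : x ∈ P := by
    refine ni_ctrl A B hctrl P ?_ ?_ x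
    · intro w
      refine ⟨w, ?_⟩
      refine (hKu w).congr fun s => ?_
      rw [htf]
    · rintro y ⟨w, hw⟩
      refine ⟨ζ • w, ?_⟩
      have h1 := (hid.smul hw).sub (hsub.smul_const (Complex.I • (Cc *ᵥ y)))
      rw [zero_smul, sub_zero] at h1
      rw [Matrix.mulVec_smul]
      refine h1.congr' ?_
      filter_upwards [ni_ev_notMem Ac ζ] with s hs
      have h2 : (s • (1 : Matrix (Fin n) (Fin n) ℂ) - Ac)⁻¹ *ᵥ (Ac *ᵥ y)
          = s • ((s • (1 : Matrix (Fin n) (Fin n) ℂ) - Ac)⁻¹ *ᵥ y) - y := by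
        have h3 := ni_inv_mul Ac s hs y
        rw [Matrix.mulVec_sub, Matrix.mulVec_smul] at h3
        rw [eq_sub_iff_add_eq, add_comm]
        rw [sub_eq_iff_eq_add] at h3
        exact h3.symm
      rw [h2, Matrix.mulVec_sub, Matrix.mulVec_smul]
      ext i
      simp
      ring
  obtain ⟨w, hw⟩ := hxP
  have hmain : Tendsto (fun s : ℂ => Complex.I • (tf A B C 0 s *ᵥ u)) (𝓝[≠] ζ)
      (𝓝 (Complex.I • (Cc *ᵥ x) - K *ᵥ w)) := by
    refine (hw.const_sub (Complex.I • (Cc *ᵥ x))).congr' ?_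
    filter_upwards [ni_ev_notMem Ac ζ] with s hs
    have h2 : ζ • x - Ac *ᵥ x = (s • x - Ac *ᵥ x) - (s - ζ) • x := by
      rw [sub_smul]; abel
    rw [htf, ← hx, h2, Matrix.mulVec_sub, ni_inv_mul Ac s hs, Matrix.mulVec_smul, Matrix.mulVec_sub,
      Matrix.mulVec_smul, smul_sub, smul_comm Complex.I]
  have hKu0 : K *ᵥ u = 0 := by
    have h1 := hsub.smul hmain
    rw [zero_smul] at h1
    exact tendsto_nhds_unique (hKu u) h1
  have hKw : star u ⬝ᵥ (K *ᵥ w) = 0 := by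
    have h1 : star (K *ᵥ u) = 0 := by rw [hKu0]; simp
    rw [Matrix.star_mulVec, hKp.1.eq] at h1
    rw [Matrix.dotProduct_mulVec, h1, zero_dotProduct]
  have hlim : Tendsto (fun s : ℂ => Complex.I * ni_q A B C 0 u s) (𝓝[≠] ζ)
      (𝓝 (Complex.I * (star u ⬝ᵥ (Cc *ᵥ x)))) := by
    have hc : Continuous (fun y : Fin m → ℂ => star u ⬝ᵥ y) := by fun_prop
    have h1 := (hc.tendsto _).comp hmain
    rw [dotProduct_sub, hKw, sub_zero, dotProduct_smul, smul_eq_mul] at h1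
    refine h1.congr fun s => ?_
    simp [ni_q, dotProduct_smul]
  have hpath : Tendsto (fun t : ℝ => Complex.I * (t : ℂ)) (𝓝[≠] ω) (𝓝[≠] ζ) := by
    refine tendsto_nhdsWithin_iff.2 ⟨?_, ?_⟩
    · have : Continuous (fun t : ℝ => Complex.I * (t : ℂ)) := by fun_prop
      exact (this.tendsto ω).mono_left nhdsWithin_le_nhds
    · filter_upwards [self_mem_nhdsWithin] with t ht h
      apply ht
      have := mul_left_cancel₀ Complex.I_ne_zero h
      exact_mod_cast this
  have hre := (Complex.continuous_re.tendsto _).comp (hlim.comp hpath)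
  have h0 : 0 ≤ (Complex.I * (star u ⬝ᵥ (Cc *ᵥ x))).re := by
    refine ge_of_tendsto hre ?_
    have hgt : ∀ᶠ t in 𝓝[≠] ω, 0 < t := mem_nhdsWithin_of_mem_nhds (lt_mem_nhds hω)
    filter_upwards [hgt, hpath.eventually (ni_ev_notMem Ac ζ)] with t ht hte
    have := ni_fr_im A B C 0 hNIfr u t ht hte
    simpa using this
  simpa using h0

lemma ni_sni {n m : ℕ}
    (A : Matrix (Fin n) (Fin n) ℝ) (B : Matrix (Fin n) (Fin m) ℝ)
    (C : Matrix (Fin m) (Fin n) ℝ) (D : Matrix (Fin m) (Fin m) ℝ)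
    (h : IsSNI A B C D) (v : Fin m → ℂ) (s : ℂ) (hs : 0 < s.re) :
    (star s * (ni_q A B C D v s - ni_q A B C D v 0)).re ≤ 0 ∧ (ni_q A B C D v 0).im = 0 := by
  have hstar : ∀ t : ℝ, star (Complex.I * (t : ℂ)) = Complex.I * ((-t : ℝ) : ℂ) := by
    intro t
    simp
  have hfr : ∀ ω : ℝ, 0 < ω → (Complex.I * ω) ∉ eigs A →
      (Complex.I • (tf A B C D (Complex.I * ω) - (tf A B C D (Complex.I * ω))ᴴ)).PosSemidef :=
    fun ω hω _ => (h.2 ω hω).posSemidef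
  have hne : ∀ s : ℂ, 0 ≤ s.re → s ∉ eigs A := fun s hs h' => absurd (h.1 s h') (not_lt.2 hs)
  have himpos : ∀ (v : Fin m → ℂ) (ω : ℝ), 0 < ω → (ni_q A B C D v (Complex.I * ω)).im ≤ 0 :=
    fun v ω hω => ni_fr_im A B C D hfr v ω hω (hne _ (by simp))
  have himneg : ∀ (v : Fin m → ℂ) (ω : ℝ), ω < 0 → 0 ≤ (ni_q A B C D v (Complex.I * ω)).im := by
    intro v ω hω
    have h1 := himpos (star v) (-ω) (by linarith)
    have h2 := ni_q_conj A B C D v (Complex.I * ((-ω : ℝ) : ℂ))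
    rw [hstar, neg_neg] at h2
    rw [h2]
    simpa using h1
  have hcont : Tendsto (fun t : ℝ => (ni_q A B C D v (Complex.I * t)).im) (𝓝 0)
      (𝓝 (ni_q A B C D v 0).im) := by
    have h1 := (ni_q_diff A B C D v 0 (hne 0 (by simp))).continuousAt.tendsto
    have h2 : Tendsto (fun t : ℝ => Complex.I * (t : ℂ)) (𝓝 0) (𝓝 0) := by
      have : Continuous (fun t : ℝ => Complex.I * (t : ℂ)) := by fun_prop
      simpa using this.tendsto 0
    exact (Complex.continuous_im.tendsto _).comp (h1.comp h2)
  have him0 : (ni_q A B C D v 0).im = 0 := by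
    apply le_antisymm
    · refine le_of_tendsto (hcont.mono_left (nhdsWithin_le_nhds (s := Set.Ioi 0))) ?_
      filter_upwards [self_mem_nhdsWithin] with t ht
      exact himpos v t ht
    · refine ge_of_tendsto (hcont.mono_left (nhdsWithin_le_nhds (s := Set.Iio 0))) ?_
      filter_upwards [self_mem_nhdsWithin] with t ht
      exact himneg v t ht
  refine ⟨?_, him0⟩
  set Ac := A.map Complex.ofReal with hAc
  set E : Matrix (Fin n) (Fin n) ℂ := ((0 : ℂ) • (1 : Matrix (Fin n) (Fin n) ℂ) - Ac)⁻¹ with hE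
  set g : ℂ → ℂ := fun s => (star v ᵥ* C.map Complex.ofReal ᵥ* E) ⬝ᵥ
    ((s • (1 : Matrix (Fin n) (Fin n) ℂ) - Ac)⁻¹ *ᵥ (B.map Complex.ofReal *ᵥ v)) with hg
  have hgs : ∀ s : ℂ, s ∉ eigs A → s * g s = ni_q A B C D v 0 - ni_q A B C D v s := by
    intro s hs
    have hu0 := ni_unit Ac 0 (hne 0 (by simp))
    have hus := ni_unit Ac s hs
    have h1 : s • (E * (s • (1 : Matrix (Fin n) (Fin n) ℂ) - Ac)⁻¹)
        = E - (s • (1 : Matrix (Fin n) (Fin n) ℂ) - Ac)⁻¹ := by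
      have h2 : s • (1 : Matrix (Fin n) (Fin n) ℂ) = (s • (1 : Matrix (Fin n) (Fin n) ℂ) - Ac)
          - ((0 : ℂ) • (1 : Matrix (Fin n) (Fin n) ℂ) - Ac) := by simp
      calc s • (E * (s • (1 : Matrix (Fin n) (Fin n) ℂ) - Ac)⁻¹)
          = E * (s • (1 : Matrix (Fin n) (Fin n) ℂ))
            * (s • (1 : Matrix (Fin n) (Fin n) ℂ) - Ac)⁻¹ := by simp
        _ = E * ((s • (1 : Matrix (Fin n) (Fin n) ℂ) - Ac)
          - ((0 : ℂ) • (1 : Matrix (Fin n) (Fin n) ℂ) - Ac))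
            * (s • (1 : Matrix (Fin n) (Fin n) ℂ) - Ac)⁻¹ := by rw [← h2]
        _ = _ := by
          rw [mul_sub, sub_mul, mul_assoc, Matrix.mul_nonsing_inv _ hus, mul_one,
            Matrix.nonsing_inv_mul _ hu0, one_mul]
    rw [ni_q_eq, ni_q_eq, add_sub_add_right_eq_sub, ← dotProduct_sub, ← Matrix.sub_mulVec, ← hAc,
      ← hE, ← h1, Matrix.smul_mulVec, dotProduct_smul, smul_eq_mul, hg, ← Matrix.mulVec_mulVec]
    simp only [Matrix.dotProduct_mulVec]
  have hpr : 0 ≤ (g s).re := by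
    refine ni_pr_of_boundary g {0} (Set.finite_singleton _) ?_ ?_ ?_ ?_ 0 ?_ s hs
    · intro s hs
      exact ni_rz_diff Ac _ _ s (hne s hs.le)
    · intro ω
      filter_upwards [ni_ev_notMem Ac (Complex.I * ω)] with s hs
      exact ni_rz_diff Ac _ _ s hs
    · intro ω
      refine ⟨0, le_rfl, ?_⟩
      have h1 : ContinuousAt (fun s => (s - Complex.I * ω) * g s) (Complex.I * ω) := by
        have : ContinuousAt g (Complex.I * ω) :=
          (ni_rz_diff Ac _ _ (Complex.I * ω) (hne _ (by simp))).continuousAt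
        fun_prop
      have h2 := h1.tendsto
      simp only [sub_self, zero_mul] at h2
      simpa using h2.mono_left nhdsWithin_le_nhds
    · intro ω hω
      have h1 := congrArg Complex.im (hgs (Complex.I * ω) (hne _ (by simp)))
      rw [Complex.sub_im, him0] at h1
      have h2 : (Complex.I * (ω : ℂ) * g (Complex.I * ω)).im = ω * (g (Complex.I * ω)).re := by
        simp
      rw [h2] at h1
      rcases lt_or_gt_of_ne hω with h | h
      · have := himneg v ω h
        nlinarith
      · have := himpos v ω h
        nlinarith
    · exact ni_rz_inf Ac _ _
  have h1 := hgs s (hne s hs.le)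
  have h2 : star s * (ni_q A B C D v s - ni_q A B C D v 0) = -((Complex.normSq s : ℂ) * g s) := by
    rw [← Complex.mul_conj, ← neg_sub (ni_q A B C D v 0), ← h1]
    simp only [RCLike.star_def]
    ring
  rw [h2]
  simp only [Complex.neg_re, Complex.re_ofReal_mul]
  have := mul_nonneg (Complex.normSq_nonneg s) hpr
  linarith
/-- Stability of the positive feedback interconnection of an NI system with a possible simple
pole at the origin and a strictly negative SNI system. -/
theorem ni_pole_at_origin_stability {n ns m : ℕ}
    (A : Matrix (Fin n) (Fin n) ℝ) (B : Matrix (Fin n) (Fin m) ℝ)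
    (C : Matrix (Fin m) (Fin n) ℝ)
    (As : Matrix (Fin ns) (Fin ns) ℝ) (Bs : Matrix (Fin ns) (Fin m) ℝ)
    (Cs : Matrix (Fin m) (Fin ns) ℝ) (Ds : Matrix (Fin m) (Fin m) ℝ)
    (hmin : IsMinimal A B C) (hmins : IsMinimal As Bs Cs)
    (hstable : ∀ μ ∈ eigs A, μ.re ≤ 0)
    (hpole0 : (0 : ℂ) ∈ eigs A →
      ∃ K : Matrix (Fin m) (Fin m) ℂ,
        Tendsto (fun s : ℂ => s • tf A B C 0 s) (𝓝[≠] (0 : ℂ)) (𝓝 K) ∧ K.PosSemidef)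
    (hNIfr : ∀ ω : ℝ, 0 < ω → (Complex.I * ω) ∉ eigs A →
      (Complex.I • (tf A B C 0 (Complex.I * ω) - (tf A B C 0 (Complex.I * ω))ᴴ)).PosSemidef)
    (hNIres : ∀ ω : ℝ, 0 < ω → (Complex.I * ω) ∈ eigs A →
      ∃ K : Matrix (Fin m) (Fin m) ℂ,
        Tendsto (fun s : ℂ => (s - Complex.I * ω) • Complex.I • tf A B C 0 s)
          (𝓝[≠] (Complex.I * ω)) (𝓝 K) ∧ K.PosSemidef)
    (hSNI : IsSNI As Bs Cs Ds)
    (hneg : ∀ s : ℂ, 0 ≤ s.re →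
      (-(tf As Bs Cs Ds s + (tf As Bs Cs Ds s)ᴴ)).PosDef)
    (hns : (A + B * (Ds - Cs * As⁻¹ * Bs) * C).det ≠ 0) :
    IsHurwitz (Matrix.fromBlocks (A + B * Ds * C) (B * Cs) (Bs * C) As) := by

  intro μ' hμ'
  by_contra hre'
  push Not at hre'
  obtain ⟨μ, hμ, hre, him⟩ : ∃ μ ∈ eigs (Matrix.fromBlocks (A + B * Ds * C) (B * Cs) (Bs * C) As),
      0 ≤ μ.re ∧ 0 ≤ μ.im := by
    rcases le_total 0 μ'.im with h | h
    · exact ⟨μ', hμ', hre', h⟩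
    · exact ⟨star μ', ni_eigs_conj _ _ hμ', by simpa using hre', by simpa using h⟩
  clear hμ' hre' μ'
  rw [eigs, ni_mem_spec] at hμ
  obtain ⟨x, hx0, hx⟩ := hμ
  set x1 : Fin n → ℂ := x ∘ Sum.inl with hx1
  set x2 : Fin ns → ℂ := x ∘ Sum.inr with hx2
  have hmapadd : (A + B * Ds * C).map Complex.ofReal = A.map Complex.ofReal
      + B.map Complex.ofReal * Ds.map Complex.ofReal * C.map Complex.ofReal := by
    rw [← ni_map_mul, ← ni_map_mul]
    ext i j; simp
  rw [Matrix.fromBlocks_map, Matrix.fromBlocks_mulVec, hmapadd, ni_map_mul, ni_map_mul] at hx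
  have E1 : A.map Complex.ofReal *ᵥ x1 + B.map Complex.ofReal *ᵥ
      (Cs.map Complex.ofReal *ᵥ x2 + Ds.map Complex.ofReal *ᵥ (C.map Complex.ofReal *ᵥ x1))
      = μ • x1 := by
    have h1 : (μ • x) ∘ Sum.inl = μ • x1 := rfl
    rw [← h1, ← hx, Sum.elim_comp_inl]
    simp only [Matrix.add_mulVec, Matrix.mulVec_add, Matrix.mulVec_mulVec, Matrix.mul_assoc]
    abel
  have E2 : Bs.map Complex.ofReal *ᵥ (C.map Complex.ofReal *ᵥ x1) + As.map Complex.ofReal *ᵥ x2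
      = μ • x2 := by
    have h1 : (μ • x) ∘ Sum.inr = μ • x2 := rfl
    rw [← h1, ← hx, Sum.elim_comp_inr]
    simp only [Matrix.mulVec_mulVec]
    rfl
  clear hx hmapadd
  have hne : ∀ s : ℂ, 0 ≤ s.re → s ∉ eigs As := fun s hs h' =>
    absurd (hSNI.1 s h') (not_lt.2 hs)
  have hx0' : ¬ (x1 = 0 ∧ x2 = 0) := by
    rintro ⟨h1, h2⟩
    apply hx0
    ext i
    rcases i with i | i
    · exact congrFun h1 i
    · exact congrFun h2 i
  have hx2e : x2 = (μ • (1 : Matrix (Fin ns) (Fin ns) ℂ) - As.map Complex.ofReal)⁻¹ *ᵥ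
      (Bs.map Complex.ofReal *ᵥ (C.map Complex.ofReal *ᵥ x1)) := by
    have h1 := ni_inv_mul (As.map Complex.ofReal) μ (hne μ hre) x2
    rw [← E2, add_sub_cancel_right] at h1
    exact h1.symm
  set v := C.map Complex.ofReal *ᵥ x1 with hv
  set u := Cs.map Complex.ofReal *ᵥ x2 + Ds.map Complex.ofReal *ᵥ v with hu
  have hutf : u = tf As Bs Cs Ds μ *ᵥ v := by
    rw [ni_tf_mulVec, ← hx2e]
  have hBu : μ • x1 - A.map Complex.ofReal *ᵥ x1 = B.map Complex.ofReal *ᵥ u := by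
    rw [← E1, add_sub_cancel_left]
  have hv0 : v ≠ 0 := by
    intro h0
    have hu0 : u = 0 := by rw [hutf, h0, Matrix.mulVec_zero]
    rw [hu0, Matrix.mulVec_zero, sub_eq_zero] at hBu
    have h1 := ni_obs A C hmin.2 x1 μ hBu.symm h0
    refine hx0' ⟨h1, ?_⟩
    rw [hx2e, h0, Matrix.mulVec_zero, Matrix.mulVec_zero]
  have hz : star u ⬝ᵥ v = star (ni_q As Bs Cs Ds v μ) := by
    rw [ni_q, ← hutf, ← Matrix.star_dotProduct]
  rcases hre.lt_or_eq with hpos | hzero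
  · have hA : μ ∉ eigs A := fun h => absurd (hstable μ h) (not_le.2 hpos)
    have h1 := ni_R_pr A B C hstable hpole0 hNIfr hNIres u μ hpos
    have h2 : ni_q A B C 0 u μ = star u ⬝ᵥ v := by
      rw [ni_q, ni_tf_mulVec, ← hBu, ni_inv_mul _ μ hA]
      simp [hv]
    rw [h2, hz] at h1
    obtain ⟨h3, h4⟩ := ni_sni As Bs Cs Ds hSNI v μ hpos
    have h5 := (hneg 0 (by simp)).dotProduct_mulVec_pos hv0
    rw [Matrix.neg_mulVec, Matrix.add_mulVec, dotProduct_neg, dotProduct_add, ni_herm_form] at h5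
    change 0 < -(ni_q As Bs Cs Ds v 0 + star (ni_q As Bs Cs Ds v 0)) at h5
    have h6 := (Complex.pos_iff.1 h5).1
    simp at h6 h1 h3
    rw [h4] at h3
    nlinarith
  · rcases him.lt_or_eq with hpos | hzero'
    · have hμe : μ = Complex.I * (μ.im : ℂ) := by
        apply Complex.ext <;> simp [← hzero]
      rw [hμe] at hBu
      have h1 := ni_pole A B C hmin.1 hNIfr hNIres u x1 μ.im hpos hBu
      rw [← hv, hz] at h1
      have h2 := (hSNI.2 μ.im hpos).dotProduct_mulVec_pos hv0
      rw [ni_form_im, Complex.zero_lt_real, ← hμe] at h2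
      change 0 < -2 * (ni_q As Bs Cs Ds v μ).im at h2
      simp at h1
      linarith
    · have hμ0 : μ = 0 := Complex.ext hzero.symm hzero'.symm
      rw [hμ0, zero_smul] at E1 E2
      have hAs : IsUnit As.det := by
        have h1 := ni_unit (As.map Complex.ofReal) 0 (hne 0 (by simp))
        rw [zero_smul, zero_sub, ← Matrix.isUnit_iff_isUnit_det, IsUnit.neg_iff,
          Matrix.isUnit_iff_isUnit_det] at h1
        have h2 : (As.map Complex.ofReal).det = ((As.det : ℝ) : ℂ) :=
          (RingHom.map_det Complex.ofRealHom As).symm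
        rw [h2, isUnit_iff_ne_zero] at h1
        rw [isUnit_iff_ne_zero]
        exact_mod_cast h1
      have hG : As⁻¹.map Complex.ofReal * As.map Complex.ofReal = 1 := by
        rw [← ni_map_mul, Matrix.nonsing_inv_mul _ hAs]
        exact Matrix.map_one _ (map_zero Complex.ofRealHom) (map_one Complex.ofRealHom)
      have hx2' : x2 = -(As⁻¹.map Complex.ofReal *ᵥ (Bs.map Complex.ofReal *ᵥ v)) := by
        have h1 := congrArg (fun y => As⁻¹.map Complex.ofReal *ᵥ y) E2
        simp only [Matrix.mulVec_add, Matrix.mulVec_zero] at h1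
        rw [Matrix.mulVec_mulVec x2, hG, Matrix.one_mulVec] at h1
        exact eq_neg_of_add_eq_zero_right h1
      have hx1ne : x1 ≠ 0 := by
        intro h1
        apply hv0
        rw [hv, h1, Matrix.mulVec_zero]
      have hmap : (A + B * (Ds - Cs * As⁻¹ * Bs) * C).map Complex.ofReal
          = A.map Complex.ofReal + B.map Complex.ofReal * (Ds.map Complex.ofReal
            - Cs.map Complex.ofReal * As⁻¹.map Complex.ofReal * Bs.map Complex.ofReal)
              * C.map Complex.ofReal := by
        have h1 : (Ds - Cs * As⁻¹ * Bs).map Complex.ofReal = Ds.map Complex.ofReal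
            - Cs.map Complex.ofReal * As⁻¹.map Complex.ofReal * Bs.map Complex.ofReal := by
          rw [← ni_map_mul, ← ni_map_mul]
          ext i j; simp
        rw [← h1, ← ni_map_mul, ← ni_map_mul]
        ext i j; simp
      have hker : (A + B * (Ds - Cs * As⁻¹ * Bs) * C).map Complex.ofReal *ᵥ x1 = 0 := by
        rw [hmap, ← E1, hu, hx2', hv]
        simp only [Matrix.add_mulVec, Matrix.sub_mulVec, Matrix.mulVec_add, Matrix.mulVec_neg,
          Matrix.mulVec_mulVec, Matrix.mul_assoc, Matrix.mul_sub, Matrix.sub_mul]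
        abel
      have hdet : ((A + B * (Ds - Cs * As⁻¹ * Bs) * C).map Complex.ofReal).det = 0 :=
        Matrix.exists_mulVec_eq_zero_iff.1 ⟨x1, hx1ne, hker⟩
      have h2 : ((A + B * (Ds - Cs * As⁻¹ * Bs) * C).map Complex.ofReal).det
          = (((A + B * (Ds - Cs * As⁻¹ * Bs) * C).det : ℝ) : ℂ) :=
        (RingHom.map_det Complex.ofRealHom _).symm
      rw [h2] at hdet
      exact hns (by exact_mod_cast hdet)
end
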